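/- Suppose n ≥ 1 and r ≥ 4. Then sup_{z ≥ 0} |P(F_r ≤ z) − P(Y_{r−1} ≤ z)| ≤ (12 r^{1/8}/n^{1/4})·(1 + 1/r) + 41/(r^{1/4} n^{1/2}) + 28 r^{3/8}/n^{3/4} + 3 r^{1/8}/n^{5/4} + 8 r^{3/4}/n^{3/2}. -/

import Mathlib

open MeasureTheory Finset Real

noncomputable section

instance instMSPerm (r : ℕ) : MeasurableSpace (Equiv.Perm (Fin r)) := ⊤

/-- The joint law of `n` independent uniformly random permutations of `{1, …, r}`:
the uniform probability measure on the finite product space. -/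
def friedmanMeasure (n r : ℕ) : Measure (Fin n → Equiv.Perm (Fin r)) :=
  (PMF.uniformOfFintype (Fin n → Equiv.Perm (Fin r))).toMeasure

/-- `ρ_i(j) = π_i(j) - (r+1)/2`, where `π_i(j) ∈ {1, …, r}` is the rank assigned by the
`i`-th permutation to treatment `j` (a permutation of `Fin r` assigns values in `{0, …, r-1}`,
hence the `+ 1`). -/
def rho (n r : ℕ) (i : Fin n) (j : Fin r) (ω : Fin n → Equiv.Perm (Fin r)) : ℝ :=
  ((ω i j : ℕ) : ℝ) + 1 - ((r : ℝ) + 1) / 2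

/-- `S_j = (√12/√(r(r+1)n)) ∑_{i=1}^n ρ_i(j)`. -/
def Sstat (n r : ℕ) (j : Fin r) (ω : Fin n → Equiv.Perm (Fin r)) : ℝ :=
  Real.sqrt 12 / Real.sqrt ((r : ℝ) * ((r : ℝ) + 1) * (n : ℝ)) * ∑ i, rho n r i j ω

/-- Friedman's statistic `F_r = ∑_{j=1}^r S_j²`. -/
def friedman (n r : ℕ) (ω : Fin n → Equiv.Perm (Fin r)) : ℝ :=
  ∑ j, (Sstat n r j ω) ^ 2

/-- The chi-square distribution with `p` degrees of freedom: the Gamma distribution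
with shape `p/2` and rate `1/2`. -/
def chiSq (p : ℕ) : Measure ℝ := ProbabilityTheory.gammaMeasure ((p : ℝ) / 2) (1 / 2)

end

namespace FriedmanBound

open scoped BigOperators

/-- The backward difference `t ↦ g t - g (t - 1)`. -/
def bdiff (g : ℝ → ℝ) (t : ℝ) : ℝ := g t - g (t - 1)

/-- `ramp k` is the distribution function of a sum of `k + 1` independent uniform variables. -/
noncomputable def ramp : ℕ → ℝ → ℝ
  | 0 => fun t => max 0 (min t 1)
  | k + 1 => fun t => ∫ x in (t - 1)..t, ramp k x

theorem continuous_ramp : ∀ k, Continuous (ramp k)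
  | 0 => by unfold ramp; fun_prop
  | k + 1 => by
    have hc := continuous_ramp k
    have h : ramp (k + 1) = fun t => (∫ x in (0 : ℝ)..t, ramp k x) - ∫ x in (0 : ℝ)..(t - 1), ramp k x := by
      funext t
      rw [intervalIntegral.integral_interval_sub_left (hc.intervalIntegrable _ _)
        (hc.intervalIntegrable _ _)]
      rfl
    have h0 : Continuous fun t => ∫ x in (0 : ℝ)..t, ramp k x :=
      intervalIntegral.continuous_primitive (fun a b => hc.intervalIntegrable a b) 0
    rw [h]
    exact h0.sub (h0.comp (by fun_prop : Continuous fun t : ℝ => t - 1))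

theorem hasDerivAt_ramp (k : ℕ) (t : ℝ) : HasDerivAt (ramp (k + 1)) (bdiff (ramp k) t) t := by
  have hc := continuous_ramp k
  have h : ramp (k + 1) = fun t => (∫ x in (0 : ℝ)..t, ramp k x) - ∫ x in (0 : ℝ)..(t - 1), ramp k x := by
    funext t
    rw [intervalIntegral.integral_interval_sub_left (hc.intervalIntegrable _ _)
      (hc.intervalIntegrable _ _)]
    rfl
  have h0 : ∀ t, HasDerivAt (fun t => ∫ x in (0 : ℝ)..t, ramp k x) (ramp k t) t := fun t =>
    intervalIntegral.integral_hasDerivAt_right (hc.intervalIntegrable _ _)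
      (hc.stronglyMeasurableAtFilter _ _) hc.continuousAt
  rw [h]
  exact (h0 t).sub ((h0 (t - 1)).comp_sub_const t 1)

theorem ramp_mem (k : ℕ) (t : ℝ) : 0 ≤ ramp k t ∧ ramp k t ≤ 1 := by
  induction k generalizing t with
  | zero => simp [ramp]
  | succ k ih =>
    have hc := continuous_ramp k
    constructor
    · exact intervalIntegral.integral_nonneg (by linarith) fun x _ => (ih x).1
    · have := intervalIntegral.integral_mono_on (a := t - 1) (b := t) (by linarith)
        (hc.intervalIntegrable _ _) (continuous_const.intervalIntegrable (μ := volume) _ _)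
        (g := fun _ => (1 : ℝ)) fun x _ => (ih x).2
      simpa [ramp] using this

theorem ramp_of_nonpos (k : ℕ) {t : ℝ} (ht : t ≤ 0) : ramp k t = 0 := by
  induction k generalizing t with
  | zero => simp [ramp, ht]
  | succ k ih =>
    have : ramp (k + 1) t = ∫ x in (t - 1)..t, (0 : ℝ) :=
      intervalIntegral.integral_congr fun x hx => by
        rw [Set.uIcc_of_le (by linarith)] at hx
        exact ih (hx.2.trans ht)
    simpa using this

theorem ramp_of_ge (k : ℕ) {t : ℝ} (ht : k + 1 ≤ t) : ramp k t = 1 := by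
  induction k generalizing t with
  | zero => simp at ht; simp [ramp, ht]
  | succ k ih =>
    have : ramp (k + 1) t = ∫ x in (t - 1)..t, (1 : ℝ) :=
      intervalIntegral.integral_congr fun x hx => by
        rw [Set.uIcc_of_le (by linarith)] at hx
        exact ih (by push_cast at ht; linarith [hx.1])
    simpa using this

theorem ramp_monotone (k : ℕ) : Monotone (ramp k) := by
  induction k with
  | zero => intro x y h; simp only [ramp]; gcongr
  | succ k ih =>
    refine monotone_of_hasDerivAt_nonneg (hasDerivAt_ramp k) fun t => ?_
    exact sub_nonneg.2 (ih (by linarith))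

theorem bdiff_ramp_mem (k : ℕ) (t : ℝ) : 0 ≤ bdiff (ramp k) t ∧ bdiff (ramp k) t ≤ 1 :=
  ⟨sub_nonneg.2 (ramp_monotone k (by linarith)),
    by unfold bdiff; linarith [(ramp_mem k t).2, (ramp_mem k (t - 1)).1]⟩

theorem hasDerivAt_bdiff {g g' : ℝ → ℝ} (h : ∀ t, HasDerivAt g (g' t) t) (t : ℝ) :
    HasDerivAt (bdiff g) (bdiff g' t) t :=
  (h t).sub ((h (t - 1)).comp_sub_const t 1)

theorem continuous_bdiff {g : ℝ → ℝ} (h : Continuous g) : Continuous (bdiff g) := by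
  unfold bdiff; fun_prop

theorem abs_ramp_zero_sub_le (x y : ℝ) : |ramp 0 x - ramp 0 y| ≤ |x - y| := by
  have h1 := abs_max_sub_max_le_abs (min x 1) (min y 1) 0
  have h2 := abs_min_sub_min_le_max x 1 y 1
  simp only [sub_self, abs_zero] at h2
  rw [max_eq_left (abs_nonneg _)] at h2
  simp only [ramp]
  rw [max_comm 0, max_comm 0]
  exact h1.trans h2

theorem abs_bdiff_sub_le {g : ℝ → ℝ} {K : ℝ} (h : ∀ x y, |g x - g y| ≤ K * |x - y|) (x y : ℝ) :
    |bdiff g x - bdiff g y| ≤ 2 * K * |x - y| := by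
  have h1 := h x y
  have h2 := h (x - 1) (y - 1)
  rw [show x - 1 - (y - 1) = x - y by ring] at h2
  unfold bdiff
  rw [abs_le] at *
  constructor <;> linarith [h1.1, h1.2, h2.1, h2.2]

theorem abs_bdiff_le {g : ℝ → ℝ} {K : ℝ} (h : ∀ x, |g x| ≤ K) (x : ℝ) : |bdiff g x| ≤ 2 * K := by
  unfold bdiff
  have h1 := h x
  have h2 := h (x - 1)
  rw [abs_le] at *
  constructor <;> linarith [h1.1, h1.2, h2.1, h2.2]

theorem abs_bdiff_le_of_mem {g : ℝ → ℝ} (h : ∀ x, 0 ≤ g x ∧ g x ≤ 1) (x : ℝ) : |bdiff g x| ≤ 1 := by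
  unfold bdiff
  rw [abs_le]
  constructor <;> linarith [(h x).1, (h x).2, (h (x - 1)).1, (h (x - 1)).2]

/-- A smooth increasing step from `0` (on `x ≤ a`) to `1` (on `x ≥ a + 5 s`) with control on its
first four derivatives; the fourth one is Lipschitz and dominated by the derivative `χ₁` of a
bounded function `χ`. -/
structure SmoothStep (a s : ℝ) where
  (f f₁ f₂ f₃ f₄ χ χ₁ : ℝ → ℝ)
  hf : ∀ x, HasDerivAt f (f₁ x) x
  hf₁ : ∀ x, HasDerivAt f₁ (f₂ x) x
  hf₂ : ∀ x, HasDerivAt f₂ (f₃ x) x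
  hf₃ : ∀ x, HasDerivAt f₃ (f₄ x) x
  hχ : ∀ x, HasDerivAt χ (χ₁ x) x
  continuous_χ₁ : Continuous χ₁
  f_mem : ∀ x, 0 ≤ f x ∧ f x ≤ 1
  f_eq_zero : ∀ x ≤ a, f x = 0
  f_eq_one : ∀ x, a + 5 * s ≤ x → f x = 1
  f₁_le : ∀ x, |f₁ x| ≤ s⁻¹
  f₂_le : ∀ x, |f₂ x| ≤ s⁻¹ ^ 2
  f₃_le : ∀ x, |f₃ x| ≤ 2 * s⁻¹ ^ 3
  f₄_le : ∀ x, |f₄ x| ≤ χ₁ x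
  f₄_lip : ∀ x y, |f₄ x - f₄ y| ≤ 16 * s⁻¹ ^ 5 * |x - y|
  χ_le : ∀ x, |χ x| ≤ 4 * s⁻¹ ^ 3
  χ₁_le : ∀ x, χ₁ x ≤ 8 * s⁻¹ ^ 4

theorem hasDerivAt_rescale {g g' : ℝ → ℝ} (h : ∀ t, HasDerivAt g (g' t) t) (a q : ℝ) (k : ℕ) (x : ℝ) :
    HasDerivAt (fun x => q ^ k * g ((x - a) * q)) (q ^ (k + 1) * g' ((x - a) * q)) x := by
  have h1 : HasDerivAt (fun x : ℝ => (x - a) * q) q x := by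
    simpa using ((hasDerivAt_id x).sub_const a).mul_const q
  have := ((h ((x - a) * q)).comp x h1).const_mul (q ^ k)
  exact this.congr_deriv (by ring)

theorem abs_rescale_le {g : ℝ → ℝ} {K q : ℝ} (h : ∀ x, |g x| ≤ K) (hq : 0 < q) (k : ℕ) (y : ℝ) :
    |q ^ k * g y| ≤ K * q ^ k := by
  rw [abs_mul, abs_of_pos (pow_pos hq k), mul_comm]
  exact mul_le_mul_of_nonneg_right (h y) (pow_pos hq k).le

/-- The weights `1, 3, 3, 1` applied to unit shifts. -/
def triple (g : ℝ → ℝ) (t : ℝ) : ℝ := g t + 3 * g (t - 1) + 3 * g (t - 2) + g (t - 3)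

/-- The smooth step obtained by rescaling the distribution function of a sum of five uniforms. -/
noncomputable def smoothStep (a s : ℝ) (hs : 0 < s) : SmoothStep a s where
  f x := s⁻¹ ^ 0 * ramp 4 ((x - a) * s⁻¹)
  f₁ x := s⁻¹ ^ 1 * bdiff (ramp 3) ((x - a) * s⁻¹)
  f₂ x := s⁻¹ ^ 2 * bdiff (bdiff (ramp 2)) ((x - a) * s⁻¹)
  f₃ x := s⁻¹ ^ 3 * bdiff (bdiff (bdiff (ramp 1))) ((x - a) * s⁻¹)
  f₄ x := s⁻¹ ^ 4 * bdiff (bdiff (bdiff (bdiff (ramp 0)))) ((x - a) * s⁻¹)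
  χ x := s⁻¹ ^ 3 * (triple (ramp 1) ((x - a) * s⁻¹) - 4)
  χ₁ x := s⁻¹ ^ 4 * triple (bdiff (ramp 0)) ((x - a) * s⁻¹)
  hf := hasDerivAt_rescale (hasDerivAt_ramp 3) a _ 0
  hf₁ := hasDerivAt_rescale (hasDerivAt_bdiff (hasDerivAt_ramp 2)) a _ 1
  hf₂ := hasDerivAt_rescale (hasDerivAt_bdiff (hasDerivAt_bdiff (hasDerivAt_ramp 1))) a _ 2
  hf₃ := hasDerivAt_rescale
    (hasDerivAt_bdiff (hasDerivAt_bdiff (hasDerivAt_bdiff (hasDerivAt_ramp 0)))) a _ 3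
  hχ := by
    refine hasDerivAt_rescale (g := fun t => triple (ramp 1) t - 4) (fun t => ?_) a _ 3
    have h := hasDerivAt_ramp 0
    exact ((((h t).add (((h (t - 1)).comp_sub_const t 1).const_mul 3)).add
      (((h (t - 2)).comp_sub_const t 2).const_mul 3)).add
      ((h (t - 3)).comp_sub_const t 3)).sub_const 4
  continuous_χ₁ := by
    have := continuous_bdiff (continuous_ramp 0)
    unfold triple
    fun_prop
  f_mem x := by simpa using ramp_mem 4 _
  f_eq_zero x hx := by
    rw [ramp_of_nonpos _ (mul_nonpos_of_nonpos_of_nonneg (by linarith) (by positivity)), mul_zero]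
  f_eq_one x hx := by
    rw [ramp_of_ge, pow_zero, mul_one]
    rw [← div_eq_mul_inv, le_div_iff₀ hs]
    push_cast
    linarith
  f₁_le x := by
    simpa using abs_rescale_le (fun x => abs_bdiff_le_of_mem (ramp_mem 3) x) (inv_pos.2 hs) 1 _
  f₂_le x := by
    simpa using abs_rescale_le (fun x => abs_bdiff_le_of_mem (bdiff_ramp_mem 2) x) (inv_pos.2 hs) 2 _
  f₃_le x := by
    simpa using abs_rescale_le (abs_bdiff_le (fun x => abs_bdiff_le_of_mem (bdiff_ramp_mem 1) x))
      (inv_pos.2 hs) 3 _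
  f₄_le x := by
    rw [abs_mul, abs_of_pos (by positivity : 0 < s⁻¹ ^ 4)]
    refine mul_le_mul_of_nonneg_left ?_ (by positivity)
    generalize (x - a) * s⁻¹ = t
    have h := fun t => (bdiff_ramp_mem 0 t).1
    have h0 := h t
    have h1 := h (t - 1)
    have h2 := h (t - 2)
    have h3 := h (t - 3)
    have e : bdiff (bdiff (bdiff (bdiff (ramp 0)))) t = bdiff (ramp 0) t - 3 * bdiff (ramp 0) (t - 1)
        + 3 * bdiff (ramp 0) (t - 2) - bdiff (ramp 0) (t - 3) := by
      generalize bdiff (ramp 0) = g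
      simp only [bdiff]
      rw [show t - 1 - 1 = t - 2 by ring, show t - 2 - 1 = t - 3 by ring]
      ring
    rw [e, triple, abs_le]
    constructor <;> linarith
  f₄_lip x y := by
    have h := abs_bdiff_sub_le (abs_bdiff_sub_le (abs_bdiff_sub_le (abs_bdiff_sub_le (K := 1)
      (fun x y => by simpa using abs_ramp_zero_sub_le x y)))) ((x - a) * s⁻¹) ((y - a) * s⁻¹)
    have hs' : 0 < s⁻¹ := inv_pos.2 hs
    rw [← mul_sub, abs_mul, abs_of_pos (by positivity : 0 < s⁻¹ ^ 4)]
    rw [← sub_mul, abs_mul, abs_of_pos hs', sub_sub_sub_cancel_right] at h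
    calc _ ≤ s⁻¹ ^ 4 * _ := mul_le_mul_of_nonneg_left h (by positivity)
      _ = _ := by ring
  χ_le x := by
    refine abs_rescale_le (g := fun t => triple (ramp 1) t - 4) (fun t => ?_) (inv_pos.2 hs) 3 _
    have h := ramp_mem 1
    have h0 := h t
    have h1 := h (t - 1)
    have h2 := h (t - 2)
    have h3 := h (t - 3)
    rw [triple, abs_le]
    constructor <;> linarith
  χ₁_le x := by
    have hs' : 0 < s⁻¹ := inv_pos.2 hs
    rw [mul_comm]
    refine mul_le_mul_of_nonneg_right ?_ (by positivity)
    have h := fun t => (bdiff_ramp_mem 0 t).2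
    unfold triple
    linarith [h ((x - a) * s⁻¹), h ((x - a) * s⁻¹ - 1), h ((x - a) * s⁻¹ - 2), h ((x - a) * s⁻¹ - 3)]

theorem abs_le_of_abs_deriv_le {φ φ' : ℝ → ℝ} {K : ℝ} {m : ℕ} (hφ : ∀ u, HasDerivAt φ (φ' u) u)
    (h0 : φ 0 = 0) (hb : ∀ u, |φ' u| ≤ K * |u| ^ m) (u : ℝ) :
    |φ u| ≤ K / (m + 1) * |u| ^ (m + 1) := by
  have key : ∀ {φ φ' : ℝ → ℝ} (_ : ∀ u, HasDerivAt φ (φ' u) u) (_ : φ 0 = 0)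
      (_ : ∀ u, |φ' u| ≤ K * |u| ^ m) (u : ℝ), 0 ≤ u → |φ u| ≤ K / (m + 1) * u ^ (m + 1) := by
    intro φ φ' hφ h0 hb u hu
    have hB : ∀ x : ℝ, HasDerivAt (fun x => K / (m + 1) * x ^ (m + 1)) (K * x ^ m) x := fun x => by
      have := (hasDerivAt_pow (m + 1) x).const_mul (K / (m + 1))
      refine this.congr_deriv ?_
      push_cast
      field_simp
    refine image_norm_le_of_norm_deriv_right_le_deriv_boundary (a := 0) (b := u) (f := φ) (f' := φ')
      (fun x _ => (hφ x).continuousAt.continuousWithinAt) (fun x _ => (hφ x).hasDerivWithinAt)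
      (by simp [h0]) hB (fun x hx => ?_) ⟨hu, le_rfl⟩
    simpa [abs_of_nonneg hx.1] using hb x
  rcases le_total 0 u with hu | hu
  · simpa [abs_of_nonneg hu] using key hφ h0 hb u hu
  · have := key (φ := fun x => φ (-x)) (φ' := fun x => -φ' (-x))
      (fun x => ((hφ (-x)).comp x (hasDerivAt_neg x)).congr_deriv (by ring)) (by simpa using h0)
      (fun x => by simpa using hb (-x)) (-u) (by linarith)
    simpa [abs_of_nonpos hu] using this

namespace SmoothStep

variable {a s : ℝ} (S : SmoothStep a s)

theorem taylor_f₃ (b u : ℝ) : |S.f₂ (b + u) - S.f₂ b - S.f₃ b * u - S.f₄ b * u ^ 2 / 2|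
    ≤ 8 / 3 * s⁻¹ ^ 5 * |u| ^ 3 := by
  have h3 : ∀ u, |S.f₃ (b + u) - S.f₃ b - S.f₄ b * u| ≤ 16 * s⁻¹ ^ 5 / 2 * |u| ^ 2 := fun u => by
    have := abs_le_of_abs_deriv_le (φ := fun u => S.f₃ (b + u) - S.f₃ b - S.f₄ b * u)
      (φ' := fun u => S.f₄ (b + u) - S.f₄ b) (K := 16 * s⁻¹ ^ 5) (m := 1) (fun u => by
        have := (((S.hf₃ (b + u)).comp_const_add b u).sub_const (S.f₃ b)).sub
          ((hasDerivAt_id u).const_mul (S.f₄ b))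
        exact this.congr_deriv (by simp)) (by simp) (fun u => by simpa using S.f₄_lip (b + u) b) u
    norm_num at this ⊢
    exact this
  have := abs_le_of_abs_deriv_le (φ := fun u => S.f₂ (b + u) - S.f₂ b - S.f₃ b * u - S.f₄ b * u ^ 2 / 2)
      (φ' := fun u => S.f₃ (b + u) - S.f₃ b - S.f₄ b * u) (K := 16 * s⁻¹ ^ 5 / 2) (m := 2) (fun u => by
        have := ((((S.hf₂ (b + u)).comp_const_add b u).sub_const (S.f₂ b)).sub
          ((hasDerivAt_id u).const_mul (S.f₃ b))).sub (((hasDerivAt_pow 2 u).const_mul (S.f₄ b)).div_const 2)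
        refine this.congr_deriv ?_
        push_cast
        ring) (by simp) h3 u
  refine this.trans (le_of_eq ?_)
  push_cast
  ring

theorem taylor_f₁ (b u : ℝ) :
    |S.f₁ (b + u) - S.f₁ b - S.f₂ b * u - S.f₃ b * u ^ 2 / 2 - S.f₄ b * u ^ 3 / 6|
    ≤ 2 / 3 * s⁻¹ ^ 5 * |u| ^ 4 := by
  have := abs_le_of_abs_deriv_le
      (φ := fun u => S.f₁ (b + u) - S.f₁ b - S.f₂ b * u - S.f₃ b * u ^ 2 / 2 - S.f₄ b * u ^ 3 / 6)
      (φ' := fun u => S.f₂ (b + u) - S.f₂ b - S.f₃ b * u - S.f₄ b * u ^ 2 / 2)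
      (K := 8 / 3 * s⁻¹ ^ 5) (m := 3) (fun u => by
        have := (((((S.hf₁ (b + u)).comp_const_add b u).sub_const (S.f₁ b)).sub
          ((hasDerivAt_id u).const_mul (S.f₂ b))).sub
          (((hasDerivAt_pow 2 u).const_mul (S.f₃ b)).div_const 2)).sub
          (((hasDerivAt_pow 3 u).const_mul (S.f₄ b)).div_const 6)
        refine this.congr_deriv ?_
        push_cast
        ring) (by simp) (S.taylor_f₃ b) u
  refine this.trans (le_of_eq ?_)
  push_cast
  ring

set_option maxHeartbeats 1000000 in
/-- One-step comparison: the average of the first-order term against its Gaussian counterpart. -/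
theorem abs_expect_step_le {P : Type*} [Fintype P] [Nonempty P] (hs : 0 < s) {L : P → ℝ} {B D τ : ℝ}
    (hB : 0 ≤ B) (hD : 0 < D) (hτ : 0 < τ) (h1 : 𝔼 p, L p = 0) (h2 : 𝔼 p, L p ^ 2 = B)
    (h3 : 𝔼 p, L p ^ 3 = 0) (h4 : 𝔼 p, L p ^ 4 ≤ 18 * B ^ 2) (h6 : 𝔼 p, L p ^ 6 ≤ 540 * B ^ 3)
    {b : ℝ} (hb : b = B + τ ^ 2 * D) :
    |𝔼 p, (S.f₁ (b + 2 * τ * L p) * L p / τ - 2 * (b + 2 * τ * L p) * S.f₂ (b + 2 * τ * L p))|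
      ≤ 2 * τ ^ 2 * D * s⁻¹ ^ 2 + 16 * τ ^ 2 * b * s⁻¹ ^ 3 + 20 * τ ^ 2 * (S.χ₁ b * (b * B))
        + s⁻¹ ^ 5 * τ ^ 3 * (896 * √D * b ^ 2 + 427 * b ^ 3 / √D)
        + 1536 * s⁻¹ ^ 5 * τ ^ 4 * b ^ 2 := by
  set q := s⁻¹ with hq
  have hq0 : 0 < q := inv_pos.2 hs
  set e := √D with he
  have he0 : 0 < e := Real.sqrt_pos.2 hD
  have hBb : B ≤ b := by rw [hb]; nlinarith [sq_nonneg τ]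
  have hb0 : 0 ≤ b := hB.trans hBb
  set c₀ := -2 * b * S.f₂ b
  set c₁ := S.f₁ b / τ - 4 * b * τ * S.f₃ b - 4 * τ * S.f₂ b
  set c₂ := 2 * S.f₂ b - 4 * b * τ ^ 2 * S.f₄ b - 8 * τ ^ 2 * S.f₃ b
  set c₃ := 2 * τ * S.f₃ b - 8 * τ ^ 3 * S.f₄ b
  set c₄ := 4 / 3 * τ ^ 2 * S.f₄ b
  set Y : P → ℝ := fun p =>
    S.f₁ (b + 2 * τ * L p) * L p / τ - 2 * (b + 2 * τ * L p) * S.f₂ (b + 2 * τ * L p) with hY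
  set Z : P → ℝ := fun p => c₀ + c₁ * L p + c₂ * L p ^ 2 + c₃ * L p ^ 3 + c₄ * L p ^ 4 with hZ
  set R : P → ℝ := fun p => 32 / 3 * q ^ 5 * τ ^ 3 * (4 * e * L p ^ 4 + L p ^ 6 / (16 * e))
    + 128 / 3 * q ^ 5 * τ ^ 3 * b * (3 * e * L p ^ 2 + L p ^ 4 / (12 * e))
    + 256 / 3 * q ^ 5 * τ ^ 4 * L p ^ 4 with hR
  have hpt : ∀ p, |Y p - Z p| ≤ R p := by
    intro p
    have t1 := S.taylor_f₁ b (2 * τ * L p)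
    have t2 := S.taylor_f₃ b (2 * τ * L p)
    set u := 2 * τ * L p with hu
    set l := L p
    set r1 := S.f₁ (b + u) - S.f₁ b - S.f₂ b * u - S.f₃ b * u ^ 2 / 2 - S.f₄ b * u ^ 3 / 6
    set r2 := S.f₂ (b + u) - S.f₂ b - S.f₃ b * u - S.f₄ b * u ^ 2 / 2
    have e1 : Y p - Z p = r1 * (l / τ) - 2 * b * r2 - 2 * u * r2 := by
      simp only [hY, hZ, r1, r2, c₀, c₁, c₂, c₃, c₄]
      change S.f₁ (b + u) * l / τ - 2 * (b + u) * S.f₂ (b + u) - _ = _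
      rw [hu]
      field_simp
      ring
    have hau : |u| = 2 * τ * |l| := by rw [hu, abs_mul, abs_of_pos (by positivity)]
    have b1 : |r1 * (l / τ)| ≤ 32 / 3 * q ^ 5 * τ ^ 3 * |l| ^ 5 := by
      rw [abs_mul, abs_div, abs_of_pos hτ]
      calc _ ≤ 2 / 3 * q ^ 5 * |u| ^ 4 * (|l| / τ) := mul_le_mul_of_nonneg_right t1 (by positivity)
        _ = _ := by rw [hau]; field_simp; ring
    have b2 : |2 * b * r2| ≤ 128 / 3 * q ^ 5 * τ ^ 3 * b * |l| ^ 3 := by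
      rw [abs_mul, abs_of_nonneg (by positivity : 0 ≤ 2 * b)]
      calc _ ≤ 2 * b * (8 / 3 * q ^ 5 * |u| ^ 3) := mul_le_mul_of_nonneg_left t2 (by positivity)
        _ = _ := by rw [hau]; ring
    have b3 : |2 * u * r2| ≤ 256 / 3 * q ^ 5 * τ ^ 4 * |l| ^ 4 := by
      rw [abs_mul, abs_mul, abs_two]
      calc _ ≤ 2 * |u| * (8 / 3 * q ^ 5 * |u| ^ 3) := mul_le_mul_of_nonneg_left t2 (by positivity)
        _ = _ := by rw [hau]; ring
    have a5 : |l| ^ 5 ≤ 4 * e * l ^ 4 + l ^ 6 / (16 * e) := by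
      rw [← Even.pow_abs (by decide : Even 4), ← Even.pow_abs (by decide : Even 6)]
      have : 0 ≤ |l| ^ 4 * (8 * e - |l|) ^ 2 / (16 * e) := by positivity
      have e2 : |l| ^ 4 * (8 * e - |l|) ^ 2 / (16 * e)
        = 4 * e * |l| ^ 4 + |l| ^ 6 / (16 * e) - |l| ^ 5 := by field_simp; ring
      linarith
    have a3 : |l| ^ 3 ≤ 3 * e * l ^ 2 + l ^ 4 / (12 * e) := by
      rw [← Even.pow_abs (by decide : Even 4), ← Even.pow_abs (by decide : Even 2)]
      have : 0 ≤ |l| ^ 2 * (6 * e - |l|) ^ 2 / (12 * e) := by positivity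
      have e2 : |l| ^ 2 * (6 * e - |l|) ^ 2 / (12 * e)
        = 3 * e * |l| ^ 2 + |l| ^ 4 / (12 * e) - |l| ^ 3 := by field_simp; ring
      linarith
    have b1' := b1.trans (mul_le_mul_of_nonneg_left a5 (by positivity))
    have b2' := b2.trans (mul_le_mul_of_nonneg_left a3 (by positivity))
    rw [Even.pow_abs (by decide : Even 4)] at b3
    rw [e1]
    calc _ ≤ |r1 * (l / τ)| + |2 * b * r2| + |2 * u * r2| :=
          (abs_sub _ _).trans (add_le_add_left (abs_sub _ _) _)
      _ ≤ _ := add_le_add (add_le_add b1' b2') b3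
  have hYZ : |𝔼 p, Y p - 𝔼 p, Z p| ≤ 𝔼 p, R p := by
    rw [← expect_sub_distrib]
    exact (abs_expect_le _ _).trans (expect_le_expect fun p _ => hpt p)
  have hEZ : 𝔼 p, Z p = c₀ + c₂ * B + c₄ * 𝔼 p, L p ^ 4 := by
    simp only [hZ, expect_add_distrib, ← mul_expect, h1, h2, h3, expect_const univ_nonempty]
    ring
  have hER : 𝔼 p, R p = 32 / 3 * q ^ 5 * τ ^ 3 * (4 * e * 𝔼 p, L p ^ 4 + (𝔼 p, L p ^ 6) / (16 * e))
    + 128 / 3 * q ^ 5 * τ ^ 3 * b * (3 * e * B + (𝔼 p, L p ^ 4) / (12 * e))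
    + 256 / 3 * q ^ 5 * τ ^ 4 * 𝔼 p, L p ^ 4 := by
    simp only [hR, expect_add_distrib, ← mul_expect, h2, ← expect_div]
  have h40 : 0 ≤ 𝔼 p, L p ^ 4 := expect_nonneg fun p _ => by positivity
  set M4 := 𝔼 p, L p ^ 4
  set M6 := 𝔼 p, L p ^ 6
  have hBB : B ^ 2 ≤ b ^ 2 := pow_le_pow_left₀ hB hBb 2
  have hBBB : B ^ 3 ≤ b ^ 3 := pow_le_pow_left₀ hB hBb 3
  have hbB : b * B ≤ b ^ 2 := by nlinarith
  have hbBB : b * B ^ 2 ≤ b ^ 3 := by nlinarith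
  have hER' : 𝔼 p, R p ≤ q ^ 5 * τ ^ 3 * (896 * e * b ^ 2 + 427 * b ^ 3 / e)
        + 1536 * q ^ 5 * τ ^ 4 * b ^ 2 := by
    rw [hER]
    have i1 : 32 / 3 * q ^ 5 * τ ^ 3 * (4 * e * M4 + M6 / (16 * e))
        ≤ 32 / 3 * q ^ 5 * τ ^ 3 * (4 * e * (18 * b ^ 2) + 540 * b ^ 3 / (16 * e)) := by
      gcongr <;> linarith
    have i2 : 128 / 3 * q ^ 5 * τ ^ 3 * b * (3 * e * B + M4 / (12 * e))
        ≤ 128 / 3 * q ^ 5 * τ ^ 3 * (3 * e * b ^ 2 + 18 * b ^ 3 / (12 * e)) := by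
      calc _ ≤ 128 / 3 * q ^ 5 * τ ^ 3 * b * (3 * e * B + 18 * B ^ 2 / (12 * e)) := by gcongr
        _ = 128 / 3 * q ^ 5 * τ ^ 3 * (3 * e * (b * B) + 18 * (b * B ^ 2) / (12 * e)) := by ring
        _ ≤ _ := by gcongr
    have i3 : 256 / 3 * q ^ 5 * τ ^ 4 * M4 ≤ 256 / 3 * q ^ 5 * τ ^ 4 * (18 * b ^ 2) := by
      gcongr; linarith
    have i4 : 0 ≤ q ^ 5 * τ ^ 3 * (b ^ 3 / e) := by positivity
    refine (add_le_add (add_le_add i1 i2) i3).trans ?_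
    have : q ^ 5 * τ ^ 3 * (896 * e * b ^ 2 + 427 * b ^ 3 / e) + 1536 * q ^ 5 * τ ^ 4 * b ^ 2
      - (32 / 3 * q ^ 5 * τ ^ 3 * (4 * e * (18 * b ^ 2) + 540 * b ^ 3 / (16 * e))
        + 128 / 3 * q ^ 5 * τ ^ 3 * (3 * e * b ^ 2 + 18 * b ^ 3 / (12 * e))
        + 256 / 3 * q ^ 5 * τ ^ 4 * (18 * b ^ 2)) = 3 * (q ^ 5 * τ ^ 3 * (b ^ 3 / e)) := by
      field_simp; ring
    linarith
  have hEZ' : |𝔼 p, Z p| ≤ 2 * τ ^ 2 * D * q ^ 2 + 16 * τ ^ 2 * b * q ^ 3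
      + 20 * τ ^ 2 * (S.χ₁ b * (b * B)) := by
    have e1 : 𝔼 p, Z p = -2 * τ ^ 2 * D * S.f₂ b - 8 * τ ^ 2 * B * S.f₃ b
        + τ ^ 2 * (4 / 3 * M4 - 4 * (b * B)) * S.f₄ b := by
      rw [hEZ]
      simp only [c₀, c₂, c₄]
      linear_combination (-2 * S.f₂ b) * hb
    have j1 : |-2 * τ ^ 2 * D * S.f₂ b| ≤ 2 * τ ^ 2 * D * q ^ 2 := by
      rw [abs_mul, show -2 * τ ^ 2 * D = -(2 * τ ^ 2 * D) by ring, abs_neg,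
        abs_of_pos (by positivity)]
      exact mul_le_mul_of_nonneg_left (S.f₂_le b) (by positivity)
    have j2 : |8 * τ ^ 2 * B * S.f₃ b| ≤ 16 * τ ^ 2 * b * q ^ 3 := by
      rw [abs_mul, abs_of_nonneg (by positivity)]
      calc _ ≤ 8 * τ ^ 2 * b * (2 * q ^ 3) :=
            mul_le_mul (by gcongr) (S.f₃_le b) (abs_nonneg _) (by positivity)
        _ = _ := by ring
    have j3 : |τ ^ 2 * (4 / 3 * M4 - 4 * (b * B)) * S.f₄ b| ≤ 20 * τ ^ 2 * (S.χ₁ b * (b * B)) := by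
      have k : |4 / 3 * M4 - 4 * (b * B)| ≤ 20 * (b * B) := by
        have k1 : B ^ 2 ≤ b * B := by nlinarith
        have k2 : 0 ≤ b * B := mul_nonneg hb0 hB
        rw [abs_le]; constructor <;> linarith
      rw [abs_mul, abs_mul, abs_of_pos (by positivity : 0 < τ ^ 2)]
      calc _ ≤ τ ^ 2 * (20 * (b * B)) * S.χ₁ b :=
            mul_le_mul (by gcongr) (S.f₄_le b) (abs_nonneg _) (by positivity)
        _ = _ := by ring
    rw [e1]
    exact (abs_add_le _ _).trans (add_le_add ((abs_sub _ _).trans (add_le_add j1 j2)) j3)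
  have := abs_add_le (𝔼 p, Y p - 𝔼 p, Z p) (𝔼 p, Z p)
  rw [sub_add_cancel] at this
  linarith

end SmoothStep

section Gaussian

variable {E : Type*} [NormedAddCommGroup E]

/-- Continuous functions of polynomial growth. -/
def PolyGrowth (u : E → ℝ) : Prop :=
  Continuous u ∧ ∃ (C : ℝ) (k : ℕ), ∀ x, |u x| ≤ C * (1 + ‖x‖) ^ k

namespace PolyGrowth

variable {u v : E → ℝ}

theorem of_bounded {K : ℝ} (hu : Continuous u) (h : ∀ x, |u x| ≤ K) : PolyGrowth u :=
  ⟨hu, K, 0, fun x => by simpa using h x⟩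

theorem const (c : ℝ) : PolyGrowth (fun _ : E => c) := of_bounded continuous_const fun _ => le_rfl

theorem add (hu : PolyGrowth u) (hv : PolyGrowth v) : PolyGrowth (fun x => u x + v x) := by
  obtain ⟨cu, C, k, hC⟩ := hu
  obtain ⟨cv, D, l, hD⟩ := hv
  refine ⟨cu.add cv, |C| + |D|, k + l, fun x => ?_⟩
  have h1 : (1 : ℝ) ≤ 1 + ‖x‖ := by linarith [norm_nonneg x]
  have hk : (1 + ‖x‖) ^ k ≤ (1 + ‖x‖) ^ (k + l) := pow_le_pow_right₀ h1 (by omega)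
  have hl : (1 + ‖x‖) ^ l ≤ (1 + ‖x‖) ^ (k + l) := pow_le_pow_right₀ h1 (by omega)
  calc |u x + v x| ≤ |u x| + |v x| := abs_add_le _ _
    _ ≤ C * (1 + ‖x‖) ^ k + D * (1 + ‖x‖) ^ l := add_le_add (hC x) (hD x)
    _ ≤ |C| * (1 + ‖x‖) ^ (k + l) + |D| * (1 + ‖x‖) ^ (k + l) :=
        add_le_add (mul_le_mul (le_abs_self C) hk (by positivity) (abs_nonneg _))
          (mul_le_mul (le_abs_self D) hl (by positivity) (abs_nonneg _))
    _ = _ := by ring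

theorem mul (hu : PolyGrowth u) (hv : PolyGrowth v) : PolyGrowth (fun x => u x * v x) := by
  obtain ⟨cu, C, k, hC⟩ := hu
  obtain ⟨cv, D, l, hD⟩ := hv
  refine ⟨cu.mul cv, C * D, k + l, fun x => ?_⟩
  rw [abs_mul]
  calc |u x| * |v x| ≤ C * (1 + ‖x‖) ^ k * (D * (1 + ‖x‖) ^ l) :=
        mul_le_mul (hC x) (hD x) (abs_nonneg _) ((abs_nonneg _).trans (hC x))
    _ = _ := by ring

theorem const_mul (c : ℝ) (hu : PolyGrowth u) : PolyGrowth (fun x => c * u x) := (const c).mul hu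

theorem sub (hu : PolyGrowth u) (hv : PolyGrowth v) : PolyGrowth (fun x => u x - v x) := by
  simpa [sub_eq_add_neg] using hu.add (hv.const_mul (-1))

theorem pow (hu : PolyGrowth u) (k : ℕ) : PolyGrowth (fun x => u x ^ k) := by
  induction k with
  | zero => simpa using const 1
  | succ k ih => simpa [pow_succ] using ih.mul hu

theorem sum {ι : Type*} (t : Finset ι) {w : ι → E → ℝ} (h : ∀ i ∈ t, PolyGrowth (w i)) :
    PolyGrowth (fun x => ∑ i ∈ t, w i x) := by
  classical
  induction t using Finset.induction_on with
  | empty => simpa using const 0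
  | insert i t hi ih =>
    simp only [sum_insert hi]
    exact (h i (mem_insert_self _ _)).add (ih fun j hj => h j (mem_insert_of_mem hj))

theorem norm_sq : PolyGrowth (fun x : E => ‖x‖ ^ 2) :=
  ⟨by fun_prop, 1, 2, fun x => by
    rw [abs_of_nonneg (by positivity), one_mul]
    exact pow_le_pow_left₀ (norm_nonneg x) (by linarith) 2⟩

theorem inner_left [InnerProductSpace ℝ E] (w : E) : PolyGrowth (fun x : E => inner ℝ w x) :=
  ⟨by fun_prop, ‖w‖, 1, fun x => by
    refine (abs_real_inner_le_norm _ _).trans ?_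
    rw [pow_one]
    gcongr
    linarith⟩

end PolyGrowth

variable [InnerProductSpace ℝ E]

section
variable (w : E) (c : ℝ)

theorem norm_affine_sq (x : E) :
    ‖w + c • x‖ ^ 2 = ‖w‖ ^ 2 + 2 * c * inner ℝ w x + c ^ 2 * ‖x‖ ^ 2 := by
  rw [norm_add_sq_real, inner_smul_right, norm_smul, mul_pow, Real.norm_eq_abs, sq_abs]
  ring

theorem PolyGrowth.norm_affine_sq : PolyGrowth (fun x : E => ‖w + c • x‖ ^ 2) := by
  simp only [FriedmanBound.norm_affine_sq]
  exact ((const _).add ((inner_left w).const_mul _)).add (norm_sq.const_mul _)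

theorem PolyGrowth.inner_affine : PolyGrowth (fun x : E => inner ℝ (w + c • x) x) := by
  simp only [inner_add_left, inner_smul_left, real_inner_self_eq_norm_sq]
  exact (inner_left w).add (norm_sq.const_mul _)

end

open Module

variable (E) in
/-- The density of the standard Gaussian measure. -/
noncomputable def gaussDensity (x : E) : ℝ := (2 * π) ^ (-(finrank ℝ E / 2 : ℝ)) * rexp (-(1 / 2) * ‖x‖ ^ 2)

theorem gaussDensity_nonneg (x : E) : 0 ≤ gaussDensity E x := by unfold gaussDensity; positivity

theorem continuous_gaussDensity : Continuous (gaussDensity E) := by unfold gaussDensity; fun_prop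

variable [FiniteDimensional ℝ E] [MeasurableSpace E] [BorelSpace E]

variable (E) in
/-- The standard Gaussian measure of a Euclidean space. -/
noncomputable def gauss : Measure E := volume.withDensity fun x => ENNReal.ofReal (gaussDensity E x)

theorem integrable_rexp_neg_mul_sq {b : ℝ} (hb : 0 < b) :
    Integrable fun x : E => rexp (-b * ‖x‖ ^ 2) := by
  by_contra h
  have := GaussianFourier.integral_rexp_neg_mul_sq_norm (V := E) hb
  rw [integral_undef h] at this
  have h2 : 0 < (π / b) ^ (finrank ℝ E / 2 : ℝ) := by positivity
  linarith

theorem PolyGrowth.integrable_density_mul {u : E → ℝ} (hu : PolyGrowth u) :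
    Integrable fun x => gaussDensity E x * u x := by
  obtain ⟨cu, C, k, hC⟩ := hu
  have h1 := (integrable_rexp_neg_mul_sq (E := E) (b := 1 / 4) (by norm_num)).const_mul
    ((2 * π) ^ (-(finrank ℝ E / 2 : ℝ)) * (C * ((k.factorial : ℝ) * rexp 2)))
  refine h1.mono' (continuous_gaussDensity.mul cu).aestronglyMeasurable (ae_of_all _ fun x => ?_)
  have hC0 : 0 ≤ C := by
    have := (abs_nonneg _).trans (hC 0)
    simpa using this
  have hp : (1 + ‖x‖) ^ k ≤ k.factorial * rexp 2 * rexp (1 / 4 * ‖x‖ ^ 2) := by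
    have h2 := Real.pow_div_factorial_le_exp (1 + ‖x‖) (by positivity) k
    rw [div_le_iff₀ (by positivity)] at h2
    have h3 : rexp (1 + ‖x‖) ≤ rexp 2 * rexp (1 / 4 * ‖x‖ ^ 2) := by
      rw [← Real.exp_add]
      exact Real.exp_le_exp.2 (by nlinarith [sq_nonneg (‖x‖ - 2)])
    calc _ ≤ _ := h2
      _ ≤ rexp 2 * rexp (1 / 4 * ‖x‖ ^ 2) * k.factorial := by gcongr
      _ = _ := by ring
  rw [Real.norm_eq_abs, abs_mul, abs_of_nonneg (gaussDensity_nonneg x)]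
  unfold gaussDensity
  have h4 : rexp (-(1 / 2) * ‖x‖ ^ 2) = rexp (-(1 / 4) * ‖x‖ ^ 2) * rexp (-(1 / 4) * ‖x‖ ^ 2) := by
    rw [← Real.exp_add]; ring_nf
  have h5 : rexp (-(1 / 4) * ‖x‖ ^ 2) * rexp (1 / 4 * ‖x‖ ^ 2) = 1 := by
    rw [← Real.exp_add]; simp
  calc _ ≤ (2 * π) ^ (-(finrank ℝ E / 2 : ℝ)) * rexp (-(1 / 2) * ‖x‖ ^ 2)
        * (C * (k.factorial * rexp 2 * rexp (1 / 4 * ‖x‖ ^ 2))) :=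
        mul_le_mul_of_nonneg_left ((hC x).trans (by gcongr)) (by positivity)
    _ = (2 * π) ^ (-(finrank ℝ E / 2 : ℝ)) * rexp (-(1 / 4) * ‖x‖ ^ 2) * (C * (k.factorial * rexp 2))
        * (rexp (-(1 / 4) * ‖x‖ ^ 2) * rexp (1 / 4 * ‖x‖ ^ 2)) := by rw [h4]; ring
    _ = _ := by rw [h5]; ring

theorem integral_gauss (u : E → ℝ) : ∫ x, u x ∂gauss E = ∫ x, gaussDensity E x * u x := by
  unfold gauss
  rw [integral_withDensity_eq_integral_toReal_smul
    (continuous_gaussDensity.measurable.ennreal_ofReal) (ae_of_all _ fun x => ENNReal.ofReal_lt_top)]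
  simp [ENNReal.toReal_ofReal (gaussDensity_nonneg _)]

theorem PolyGrowth.integrable {u : E → ℝ} (hu : PolyGrowth u) : Integrable u (gauss E) := by
  unfold gauss
  rw [integrable_withDensity_iff_integrable_smul₀'
    (continuous_gaussDensity.measurable.ennreal_ofReal).aemeasurable
    (ae_of_all _ fun x => ENNReal.ofReal_lt_top)]
  simpa [ENNReal.toReal_ofReal (gaussDensity_nonneg _)] using hu.integrable_density_mul

theorem integral_gaussDensity : ∫ x : E, gaussDensity E x = 1 := by
  unfold gaussDensity
  rw [integral_const_mul, GaussianFourier.integral_rexp_neg_mul_sq_norm (by norm_num),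
    show π / (1 / 2) = 2 * π by ring, ← Real.rpow_add (by positivity)]
  simp

instance : IsProbabilityMeasure (gauss E) := by
  refine ⟨?_⟩
  unfold gauss
  rw [withDensity_apply _ MeasurableSet.univ, Measure.restrict_univ,
    ← ofReal_integral_eq_lintegral_ofReal _ (ae_of_all _ gaussDensity_nonneg), integral_gaussDensity]
  · simp
  · simpa using (PolyGrowth.const (E := E) 1).integrable_density_mul

/-- Gaussian integration by parts. -/
theorem integral_mul_inner_gauss {u : E → ℝ} {u' : E → E →L[ℝ] ℝ} (v : E)
    (hu : ∀ x, HasFDerivAt u (u' x) x) (hg : PolyGrowth u) (hg' : PolyGrowth fun x => u' x v) :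
    ∫ x, u x * inner ℝ v x ∂gauss E = ∫ x, u' x v ∂gauss E := by
  have hd : ∀ x : E, HasFDerivAt (gaussDensity E)
      ((-gaussDensity E x) • (innerSL ℝ x : E →L[ℝ] ℝ)) x := fun x => by
    have := (((hasStrictFDerivAt_norm_sq x).hasFDerivAt.const_mul (-(1 / 2))).exp).const_mul
      ((2 * π) ^ (-(finrank ℝ E / 2 : ℝ)))
    refine this.congr_fderiv ?_
    ext y
    simp [gaussDensity]
    ring
  have hf : ∀ x, fderiv ℝ u x = u' x := fun x => (hu x).fderiv
  have hfd : ∀ x : E, fderiv ℝ (gaussDensity E) x v = -(gaussDensity E x * inner ℝ v x) := fun x => by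
    rw [(hd x).fderiv]
    simp [real_inner_comm]
  have key := integral_mul_fderiv_eq_neg_fderiv_mul_of_integrable (μ := (volume : Measure E))
    (f := u) (g := gaussDensity E) (v := v)
    (by simpa only [hf, mul_comm] using hg'.integrable_density_mul)
    (by
      simp only [hfd]
      refine ((hg.mul (PolyGrowth.inner_left v)).integrable_density_mul.neg).congr
        (ae_of_all _ fun x => ?_)
      simp only [Pi.neg_apply]
      ring)
    (by simpa only [mul_comm] using hg.integrable_density_mul)
    (fun x _ => (hu x).differentiableAt) (fun x _ => (hd x).differentiableAt)
  simp only [hf, hfd] at key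
  rw [integral_gauss, integral_gauss]
  have e1 : ∫ x, u x * -(gaussDensity E x * inner ℝ v x)
      = -∫ x, gaussDensity E x * (u x * inner ℝ v x) := by
    rw [← integral_neg]
    exact integral_congr_ae (ae_of_all _ fun x => by ring)
  have e2 : ∫ x, u' x v * gaussDensity E x = ∫ x, gaussDensity E x * u' x v :=
    integral_congr_ae (ae_of_all _ fun x => mul_comm _ _)
  rw [e1, e2] at key
  linarith

/-- Integration by parts for radial functions of an affine image of a Gaussian vector. -/
theorem integral_radial_mul_inner {φ φ' : ℝ → ℝ} (hφ : ∀ t, HasDerivAt φ (φ' t) t) (w : E) (c : ℝ)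
    (hg : PolyGrowth fun x : E => φ (‖w + c • x‖ ^ 2))
    (hg' : PolyGrowth fun x : E => φ' (‖w + c • x‖ ^ 2)) :
    ∫ x, φ (‖w + c • x‖ ^ 2) * inner ℝ (w + c • x) x ∂gauss E
      = c * ∫ x, finrank ℝ E * φ (‖w + c • x‖ ^ 2)
        + 2 * φ' (‖w + c • x‖ ^ 2) * ‖w + c • x‖ ^ 2 ∂gauss E := by
  set e := stdOrthonormalBasis ℝ E
  have hi : ∀ v : E, PolyGrowth fun x : E => inner ℝ v (w + c • x) := fun v => by
    simp only [inner_add_right, inner_smul_right]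
    exact (PolyGrowth.const _).add ((PolyGrowth.inner_left v).const_mul _)
  have hN : ∀ x : E, HasFDerivAt (fun x : E => ‖w + c • x‖ ^ 2)
      ((2 * c) • (innerSL ℝ (w + c • x) : E →L[ℝ] ℝ)) x := fun x => by
    have h1 : HasFDerivAt (fun x : E => w + c • x) (c • ContinuousLinearMap.id ℝ E) x :=
      ((hasFDerivAt_id x).const_smul c).const_add w
    refine ((hasStrictFDerivAt_norm_sq (w + c • x)).hasFDerivAt.comp x h1).congr_fderiv ?_
    ext y
    simp
    ring
  have hI : ∀ (v x : E), HasFDerivAt (fun x : E => inner ℝ v (w + c • x))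
      (c • (innerSL ℝ v : E →L[ℝ] ℝ)) x := fun v x => by
    have h1 : HasFDerivAt (fun x : E => w + c • x) (c • ContinuousLinearMap.id ℝ E) x :=
      ((hasFDerivAt_id x).const_smul c).const_add w
    refine ((innerSL ℝ v : E →L[ℝ] ℝ).hasFDerivAt.comp x h1).congr_fderiv ?_
    ext y
    simp
  have key : ∀ i, ∫ x, φ (‖w + c • x‖ ^ 2) * inner ℝ (e i) (w + c • x) * inner ℝ (e i) x ∂gauss E
      = ∫ x, φ (‖w + c • x‖ ^ 2) * c
        + 2 * c * φ' (‖w + c • x‖ ^ 2) * inner ℝ (e i) (w + c • x) ^ 2 ∂gauss E := fun i => by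
    have hd : ∀ x : E, HasFDerivAt (fun x : E => φ (‖w + c • x‖ ^ 2) * inner ℝ (e i) (w + c • x))
        (φ (‖w + c • x‖ ^ 2) • (c • (innerSL ℝ (e i) : E →L[ℝ] ℝ))
          + (inner ℝ (e i) (w + c • x)) • (φ' (‖w + c • x‖ ^ 2) •
            ((2 * c) • (innerSL ℝ (w + c • x) : E →L[ℝ] ℝ)))) x := fun x =>
      ((hφ _).comp_hasFDerivAt x (hN x)).mul (hI (e i) x)
    have hval : ∀ x : E, (φ (‖w + c • x‖ ^ 2) • (c • (innerSL ℝ (e i) : E →L[ℝ] ℝ))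
          + (inner ℝ (e i) (w + c • x)) • (φ' (‖w + c • x‖ ^ 2) •
            ((2 * c) • (innerSL ℝ (w + c • x) : E →L[ℝ] ℝ)))) (e i) = φ (‖w + c • x‖ ^ 2) * c
        + 2 * c * φ' (‖w + c • x‖ ^ 2) * inner ℝ (e i) (w + c • x) ^ 2 := fun x => by
      simp only [_root_.add_apply, _root_.smul_apply, innerSL_apply_apply,
        smul_eq_mul, real_inner_self_eq_norm_sq, e.norm_eq_one, real_inner_comm (e i)]
      ring
    rw [integral_mul_inner_gauss (e i) hd (hg.mul (hi _))]
    · exact integral_congr_ae (ae_of_all _ hval)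
    · simp only [hval]
      exact (hg.mul (PolyGrowth.const c)).add ((hg'.const_mul _).mul ((hi _).pow 2))
  have hs : ∀ x : E, φ (‖w + c • x‖ ^ 2) * inner ℝ (w + c • x) x
      = ∑ i, φ (‖w + c • x‖ ^ 2) * inner ℝ (e i) (w + c • x) * inner ℝ (e i) x := fun x => by
    simp only [mul_assoc, ← mul_sum]
    rw [← e.sum_inner_mul_inner (w + c • x) x]
    simp only [real_inner_comm (e _) (w + c • x)]
  simp only [hs]
  rw [integral_finsetSum _ fun i _ =>
    ((hg.mul (hi _)).mul (PolyGrowth.inner_left _)).integrable, ← integral_const_mul]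
  simp only [key]
  rw [← integral_finsetSum _ fun i _ =>
    ((hg.mul (PolyGrowth.const c)).add ((hg'.const_mul _).mul ((hi _).pow 2))).integrable]
  refine integral_congr_ae (ae_of_all _ fun x => ?_)
  simp only [sum_add_distrib, ← mul_sum, sum_const, card_univ, Fintype.card_fin, nsmul_eq_mul]
  rw [show ∑ i, inner ℝ (e i) (w + c • x) ^ 2 = ‖w + c • x‖ ^ 2 from e.sum_sq_inner_right _]
  ring

theorem integral_inner_gauss (w : E) : ∫ x, inner ℝ w x ∂gauss E = 0 := by
  have := integral_mul_inner_gauss (u := fun _ : E => (1 : ℝ)) (u' := fun _ => 0) w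
    (fun x => hasFDerivAt_const _ _) (PolyGrowth.const 1) (by simpa using PolyGrowth.const 0)
  simpa using this

theorem integral_inner_sq_gauss (w : E) : ∫ x, inner ℝ w x ^ 2 ∂gauss E = ‖w‖ ^ 2 := by
  have := integral_mul_inner_gauss (u := fun x : E => inner ℝ w x) (u' := fun _ => innerSL ℝ w) w
    (fun x => (innerSL ℝ w : E →L[ℝ] ℝ).hasFDerivAt) (PolyGrowth.inner_left w)
    (by simpa using PolyGrowth.const _)
  simpa [← sq] using this

theorem integral_norm_sq_gauss : ∫ x, ‖x‖ ^ 2 ∂gauss E = finrank ℝ E := by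
  have := integral_radial_mul_inner (φ := fun _ => 1) (φ' := fun _ => 0)
    (fun t => hasDerivAt_const _ _) (0 : E) 1 (PolyGrowth.const _) (PolyGrowth.const _)
  simpa [real_inner_self_eq_norm_sq] using this

theorem integral_norm_pow_four_gauss :
    ∫ x, (‖x‖ ^ 2) ^ 2 ∂gauss E = (finrank ℝ E + 2) * finrank ℝ E := by
  have := integral_radial_mul_inner (φ := fun t => t) (φ' := fun _ => 1)
    (fun t => hasDerivAt_id _) (0 : E) 1 (PolyGrowth.norm_affine_sq 0 1) (PolyGrowth.const _)
  simp only [zero_add, one_smul, real_inner_self_eq_norm_sq, one_mul, mul_one, ← add_mul,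
    integral_const_mul, integral_norm_sq_gauss] at this
  simpa [← sq] using this

theorem integral_inner_mul_norm_sq_gauss (w : E) :
    ∫ x, ‖x‖ ^ 2 * inner ℝ w x ∂gauss E = 0 := by
  rw [integral_mul_inner_gauss (u := fun x : E => ‖x‖ ^ 2) w
    (fun x => (hasStrictFDerivAt_norm_sq x).hasFDerivAt) PolyGrowth.norm_sq]
  · simp [integral_const_mul, real_inner_comm w, integral_inner_gauss]
  · simpa [real_inner_comm w] using (PolyGrowth.inner_left w).const_mul 2

end Gaussian

section OneStep

variable {P : Type*} [Fintype P] [Nonempty P] {L : P → ℝ} {B : ℝ}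

theorem expect_sq_affine (h1 : 𝔼 p, L p = 0) (h2 : 𝔼 p, L p ^ 2 = B) (b τ : ℝ) :
    𝔼 p, (b + 2 * τ * L p) ^ 2 = b ^ 2 + 4 * τ ^ 2 * B := by
  have : ∀ p, (b + 2 * τ * L p) ^ 2 = b ^ 2 + 4 * b * τ * L p + 4 * τ ^ 2 * L p ^ 2 :=
    fun p => by ring
  simp only [this, expect_add_distrib, ← mul_expect, h1, h2, expect_const univ_nonempty]
  ring

theorem expect_affine (h1 : 𝔼 p, L p = 0) (b τ : ℝ) : 𝔼 p, (b + 2 * τ * L p) = b := by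
  simp only [expect_add_distrib, ← mul_expect, h1, expect_const univ_nonempty]
  ring

theorem pow_le_expect_affine (h1 : 𝔼 p, L p = 0) (h2 : 𝔼 p, L p ^ 2 = B) (h3 : 𝔼 p, L p ^ 3 = 0)
    (hB : 0 ≤ B) {b : ℝ} (hb : 0 ≤ b) (τ : ℝ) {k : ℕ} (hk : k ≤ 3) :
    b ^ k ≤ 𝔼 p, (b + 2 * τ * L p) ^ k := by
  interval_cases k
  · simp [expect_const univ_nonempty]
  · simp [expect_affine h1]
  · rw [expect_sq_affine h1 h2]
    have : 0 ≤ 4 * τ ^ 2 * B := by positivity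
    linarith
  · have : ∀ p, (b + 2 * τ * L p) ^ 3 = b ^ 3 + 6 * b ^ 2 * τ * L p + 12 * b * τ ^ 2 * L p ^ 2
        + 8 * τ ^ 3 * L p ^ 3 := fun p => by ring
    simp only [this, expect_add_distrib, ← mul_expect, h1, h2, h3, expect_const univ_nonempty]
    have : 0 ≤ 12 * b * τ ^ 2 * B := by positivity
    linarith

theorem expect_pow_mul_le (h1 : 𝔼 p, L p = 0) (h2 : 𝔼 p, L p ^ 2 = B) (h3 : 𝔼 p, L p ^ 3 = 0)
    {D b τ : ℝ} (hB : 0 ≤ B) (hD : 0 ≤ D) (hb : b = B + τ ^ 2 * D) {k : ℕ} (hk : k ≤ 2) :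
    𝔼 p, (b + 2 * τ * L p) ^ k * (τ * (L p + τ * D))
      ≤ τ ^ 2 * (D + 2 * k) * 𝔼 p, (b + 2 * τ * L p) ^ k := by
  interval_cases k
  · simp only [pow_zero, one_mul, ← mul_expect, expect_add_distrib, h1, expect_const univ_nonempty]
    push_cast
    linarith
  · simp only [pow_one]
    have : ∀ p, (b + 2 * τ * L p) * (τ * (L p + τ * D))
        = b * τ ^ 2 * D + (b * τ + 2 * τ ^ 3 * D) * L p + 2 * τ ^ 2 * L p ^ 2 := fun p => by ring
    simp only [this, expect_affine h1, expect_add_distrib, ← mul_expect, h1, h2,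
      expect_const univ_nonempty]
    have : 0 ≤ τ ^ 2 * (τ ^ 2 * D) := by positivity
    push_cast
    rw [hb]
    linarith
  · have : ∀ p, (b + 2 * τ * L p) ^ 2 * (τ * (L p + τ * D)) = b ^ 2 * τ ^ 2 * D
        + (b ^ 2 * τ + 4 * b * τ ^ 3 * D) * L p + (4 * b * τ ^ 2 + 4 * τ ^ 4 * D) * L p ^ 2
        + 4 * τ ^ 3 * L p ^ 3 := fun p => by ring
    simp only [this, expect_sq_affine h1 h2, expect_add_distrib, ← mul_expect, h1, h2, h3,
      expect_const univ_nonempty]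
    have h5 : 0 ≤ τ ^ 2 * (b * (b - B)) := by
      rw [hb]; have := sq_nonneg τ; have : 0 ≤ τ ^ 2 * D := by positivity
      refine mul_nonneg (sq_nonneg _) (mul_nonneg (by linarith) (by linarith))
    have h6 : 0 ≤ τ ^ 4 * B := by positivity
    push_cast
    linarith

end OneStep

section Mean

open Module

theorem PolyGrowth.expect {E ι : Type*} [NormedAddCommGroup E] [Fintype ι] {u : ι → E → ℝ} (h : ∀ i, PolyGrowth (u i)) :
    PolyGrowth fun x => 𝔼 i, u i x := by
  simp only [Fintype.expect_eq_sum_div_card, div_eq_inv_mul]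
  exact (PolyGrowth.sum _ fun i _ => h i).const_mul _

variable {E : Type*} [NormedAddCommGroup E] [InnerProductSpace ℝ E] [FiniteDimensional ℝ E]
  [MeasurableSpace E] [BorelSpace E] {P : Type*} [Fintype P] {n : ℕ}

theorem integral_expect {ι α : Type*} [Fintype ι] [MeasurableSpace α] {μ : Measure α}
    {u : ι → α → ℝ} (h : ∀ i, Integrable (u i) μ) :
    ∫ x, 𝔼 i, u i x ∂μ = 𝔼 i, ∫ x, u i x ∂μ := by
  simp only [Fintype.expect_eq_sum_div_card]
  rw [integral_div, integral_finsetSum _ fun i _ => h i]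

/-- Expectation of a function of independent uniform samples from `P` and a Gaussian vector. -/
noncomputable def mean (Φ : (Fin n → P) → E → ℝ) : ℝ := 𝔼 ω, ∫ g, Φ ω g ∂gauss E

variable {Φ Ψ : (Fin n → P) → E → ℝ}

theorem mean_add (hΦ : ∀ ω, PolyGrowth (Φ ω)) (hΨ : ∀ ω, PolyGrowth (Ψ ω)) :
    mean (fun ω g => Φ ω g + Ψ ω g) = mean Φ + mean Ψ := by
  unfold mean
  rw [← expect_add_distrib]
  exact expect_congr rfl fun ω _ => integral_add (hΦ ω).integrable (hΨ ω).integrable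

theorem mean_const_mul (c : ℝ) : mean (fun ω g => c * Φ ω g) = c * mean Φ := by
  unfold mean
  rw [mul_expect]
  exact expect_congr rfl fun ω _ => integral_const_mul _ _

theorem mean_sub (hΦ : ∀ ω, PolyGrowth (Φ ω)) (hΨ : ∀ ω, PolyGrowth (Ψ ω)) :
    mean (fun ω g => Φ ω g - Ψ ω g) = mean Φ - mean Ψ := by
  unfold mean
  rw [← expect_sub_distrib]
  exact expect_congr rfl fun ω _ => integral_sub (hΦ ω).integrable (hΨ ω).integrable

theorem mean_sum {ι : Type*} (t : Finset ι) {Φ : ι → (Fin n → P) → E → ℝ}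
    (hΦ : ∀ i ∈ t, ∀ ω, PolyGrowth (Φ i ω)) :
    mean (fun ω g => ∑ i ∈ t, Φ i ω g) = ∑ i ∈ t, mean (Φ i) := by
  unfold mean
  rw [← expect_sum_comm]
  exact expect_congr rfl fun ω _ => integral_finsetSum _ fun i hi => (hΦ i hi ω).integrable

theorem mean_mono (hΦ : ∀ ω, PolyGrowth (Φ ω)) (hΨ : ∀ ω, PolyGrowth (Ψ ω))
    (h : ∀ ω g, Φ ω g ≤ Ψ ω g) : mean Φ ≤ mean Ψ :=
  expect_le_expect fun ω _ => integral_mono (hΦ ω).integrable (hΨ ω).integrable (h ω)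

theorem abs_mean_le (hΦ : ∀ ω, PolyGrowth (Φ ω)) (hΨ : ∀ ω, PolyGrowth (Ψ ω))
    (h : ∀ ω g, |Φ ω g| ≤ Ψ ω g) : |mean Φ| ≤ mean Ψ := by
  rw [abs_le, neg_eq_neg_one_mul, ← mean_const_mul]
  exact ⟨mean_mono (fun ω => (hΨ ω).const_mul _) hΦ fun ω g => by linarith [(abs_le.1 (h ω g)).1],
    mean_mono hΦ hΨ fun ω g => (abs_le.1 (h ω g)).2⟩

variable [Nonempty P]

@[simp] theorem mean_const (c : ℝ) : mean (fun (_ : Fin n → P) (_ : E) => c) = c := by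
  simp [mean, expect_const univ_nonempty]

theorem expect_update {ι M : Type*} [Fintype ι] [DecidableEq ι] [AddCommMonoid M] [Module ℚ≥0 M]
    (Φ : (ι → P) → M) (i : ι) :
    𝔼 ω, Φ ω = 𝔼 ω, 𝔼 p, Φ (Function.update ω i p) := by
  have h1 : 𝔼 q : (ι → P) × P, Φ (Function.update q.1 i q.2) = 𝔼 q : (ι → P) × P, Φ q.1 :=
    Fintype.expect_equiv
      { toFun := fun q => (Function.update q.1 i q.2, q.1 i)
        invFun := fun q => (Function.update q.1 i q.2, q.1 i)
        left_inv := fun q => by simp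
        right_inv := fun q => by simp } _ _ fun q => rfl
  rw [← univ_product_univ, expect_product, expect_product] at h1
  simp only [expect_const univ_nonempty] at h1
  exact h1.symm

/-- Resampling one coordinate. -/
theorem mean_update (hΦ : ∀ ω, PolyGrowth (Φ ω)) (i : Fin n) :
    mean Φ = mean fun ω g => 𝔼 p, Φ (Function.update ω i p) g := by
  unfold mean
  rw [expect_update _ i]
  exact expect_congr rfl fun ω _ => (integral_expect fun p => (hΦ _).integrable).symm

end Mean

section Design

open Module

variable {E : Type*} [NormedAddCommGroup E] [InnerProductSpace ℝ E] {P : Type*} {n : ℕ}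

/-- The interpolation between the sum of the samples and the Gaussian vector. -/
def interp (x : P → E) (τ c : ℝ) (ω : Fin n → P) (g : E) : E := τ • ∑ i, x (ω i) + c • g

/-- The interpolation with the `i`-th summand left out. -/
def interpErase (x : P → E) (τ c : ℝ) (i : Fin n) (ω : Fin n → P) (g : E) : E :=
  τ • ∑ j ∈ univ.erase i, x (ω j) + c • g

variable (x : P → E) (τ c : ℝ)

theorem interp_update (i : Fin n) (ω : Fin n → P) (p : P) (g : E) :
    interp x τ c (Function.update ω i p) g = interpErase x τ c i ω g + τ • x p := by
  unfold interp interpErase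
  rw [← add_sum_erase univ _ (mem_univ i), Function.update_self,
    sum_congr rfl fun j hj => by rw [Function.update_of_ne (ne_of_mem_erase hj)], smul_add]
  abel

theorem PolyGrowth.norm_interp_sq (ω : Fin n → P) : PolyGrowth fun g => ‖interp x τ c ω g‖ ^ 2 :=
  PolyGrowth.norm_affine_sq _ _

theorem PolyGrowth.norm_interpErase_sq (i : Fin n) (ω : Fin n → P) :
    PolyGrowth fun g => ‖interpErase x τ c i ω g‖ ^ 2 :=
  PolyGrowth.norm_affine_sq _ _

theorem PolyGrowth.inner_interp (v : E) (ω : Fin n → P) :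
    PolyGrowth fun g => inner ℝ (interp x τ c ω g) v := by
  unfold interp
  simp only [real_inner_comm v, inner_add_right, inner_smul_right]
  exact (PolyGrowth.const _).add ((PolyGrowth.inner_left v).const_mul _)

variable [Fintype P]

/-- A finite family of vectors of squared norm `dim E`, isotropic, with vanishing third moments
and controlled fourth and sixth moments. -/
structure IsDesign (x : P → E) : Prop where
  norm_sq : ∀ p, ‖x p‖ ^ 2 = finrank ℝ E
  moment_one : ∀ w, 𝔼 p, inner ℝ w (x p) = 0
  moment_two : ∀ w, 𝔼 p, inner ℝ w (x p) ^ 2 = ‖w‖ ^ 2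
  moment_three : ∀ w, 𝔼 p, inner ℝ w (x p) ^ 3 = 0
  moment_four : ∀ w, 𝔼 p, inner ℝ w (x p) ^ 4 ≤ 18 * (‖w‖ ^ 2) ^ 2
  moment_six : ∀ w, 𝔼 p, inner ℝ w (x p) ^ 6 ≤ 540 * (‖w‖ ^ 2) ^ 3

variable {x}

theorem IsDesign.inner_interp_update (hx : IsDesign x) (i : Fin n) (ω : Fin n → P) (p : P) (g : E) :
    inner ℝ (interp x τ c (Function.update ω i p) g) (x p)
      = inner ℝ (interpErase x τ c i ω g) (x p) + τ * finrank ℝ E := by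
  rw [interp_update, inner_add_left, inner_smul_left, real_inner_self_eq_norm_sq, hx.norm_sq]
  rfl

theorem IsDesign.norm_interp_update_sq (hx : IsDesign x) (i : Fin n) (ω : Fin n → P) (p : P) (g : E) :
    ‖interp x τ c (Function.update ω i p) g‖ ^ 2
      = ‖interpErase x τ c i ω g‖ ^ 2 + τ ^ 2 * finrank ℝ E
        + 2 * τ * inner ℝ (interpErase x τ c i ω g) (x p) := by
  rw [interp_update, norm_affine_sq, hx.norm_sq]
  ring

variable [FiniteDimensional ℝ E] [MeasurableSpace E] [BorelSpace E]

variable [Nonempty P] {τ c}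

theorem IsDesign.mean_pow_succ_le (hx : IsDesign x) (h : n * τ ^ 2 + c ^ 2 = 1) {k : ℕ} (hk : k ≤ 2) :
    mean (fun (ω : Fin n → P) g => (‖interp x τ c ω g‖ ^ 2) ^ (k + 1))
      ≤ (finrank ℝ E + 2 * k) * mean fun (ω : Fin n → P) g => (‖interp x τ c ω g‖ ^ 2) ^ k := by
  set M := mean fun (ω : Fin n → P) g => (‖interp x τ c ω g‖ ^ 2) ^ k with hM
  have pk : ∀ (m : ℕ) (ω : Fin n → P), PolyGrowth fun g => (‖interp x τ c ω g‖ ^ 2) ^ m :=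
    fun m ω => (PolyGrowth.norm_interp_sq x τ c ω).pow m
  have hi : ∀ ω : Fin n → P, PolyGrowth fun g => inner ℝ (interp x τ c ω g) g := fun ω =>
    PolyGrowth.inner_affine _ _
  have hg : ∀ (i : Fin n) (ω : Fin n → P), PolyGrowth fun g =>
      (‖interp x τ c ω g‖ ^ 2) ^ k * (τ * inner ℝ (interp x τ c ω g) (x (ω i))) := fun i ω =>
    (pk k ω).mul ((PolyGrowth.inner_interp x τ c _ ω).const_mul τ)
  have e1 : mean (fun (ω : Fin n → P) g => (‖interp x τ c ω g‖ ^ 2) ^ (k + 1))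
      = mean fun (ω : Fin n → P) g =>
        (∑ i, (‖interp x τ c ω g‖ ^ 2) ^ k * (τ * inner ℝ (interp x τ c ω g) (x (ω i))))
          + c * ((‖interp x τ c ω g‖ ^ 2) ^ k * inner ℝ (interp x τ c ω g) g) := by
    congr 1
    funext ω g
    rw [← mul_sum, ← mul_sum, ← inner_sum, pow_succ]
    nth_rw 2 [← real_inner_self_eq_norm_sq]
    nth_rw 3 [interp]
    rw [inner_add_right, inner_smul_right, inner_smul_right]
    ring
  rw [e1, mean_add (fun ω => PolyGrowth.sum _ fun i _ => hg i ω)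
    (fun ω => ((pk k ω).mul (hi ω)).const_mul c), mean_sum _ fun i _ => hg i, mean_const_mul]
  have e2 : mean (fun (ω : Fin n → P) g => (‖interp x τ c ω g‖ ^ 2) ^ k * inner ℝ (interp x τ c ω g) g)
      = c * ((finrank ℝ E + 2 * k) * M) := by
    rw [hM, ← mean_const_mul, ← mean_const_mul]
    unfold mean
    refine expect_congr rfl fun ω _ => ?_
    have := integral_radial_mul_inner (φ := fun t => t ^ k) (φ' := fun t => k * t ^ (k - 1))
      (fun t => hasDerivAt_pow k t) (τ • ∑ i, x (ω i)) c (pk k ω) ((pk (k - 1) ω).const_mul _)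
    refine this.trans ?_
    rw [← integral_const_mul]
    refine integral_congr_ae (ae_of_all _ fun g => ?_)
    have hk' : ∀ t : ℝ, k * t ^ (k - 1) * t = k * t ^ k := fun t => by
      rcases k with _ | k
      · simp
      · simp [pow_succ, mul_assoc]
    simp only
    rw [mul_assoc 2, hk', interp]
    ring
  have e3 : ∀ i : Fin n, mean (fun (ω : Fin n → P) g =>
      (‖interp x τ c ω g‖ ^ 2) ^ k * (τ * inner ℝ (interp x τ c ω g) (x (ω i))))
      ≤ τ ^ 2 * (finrank ℝ E + 2 * k) * M := fun i => by
    rw [hM, mean_update (hg i) i, mean_update (pk k) i, ← mean_const_mul]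
    refine mean_mono (fun ω => PolyGrowth.expect fun p => hg i _)
      (fun ω => (PolyGrowth.expect fun p => pk k _).const_mul _) fun ω g => ?_
    simp only [hx.norm_interp_update_sq, Function.update_self, hx.inner_interp_update]
    exact expect_pow_mul_le (hx.moment_one _) (hx.moment_two _) (hx.moment_three _) (sq_nonneg _)
      (Nat.cast_nonneg _) rfl hk
  calc _ ≤ ∑ i : Fin n, τ ^ 2 * (finrank ℝ E + 2 * k) * M + c * (c * ((finrank ℝ E + 2 * k) * M)) := by
        rw [e2]
        gcongr with i
        exact e3 i
    _ = (n * τ ^ 2 + c ^ 2) * ((finrank ℝ E + 2 * k) * M) := by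
        simp only [sum_const, card_univ, Fintype.card_fin, nsmul_eq_mul]
        ring
    _ = _ := by rw [h, one_mul]

/-- The shifted squared norm of the vector with one summand left out is dominated, in mean, by
the squared norm of the whole vector. -/
theorem IsDesign.mean_erase_pow_le (hx : IsDesign x) (i : Fin n) {k : ℕ} (hk : k ≤ 3) :
    mean (fun (ω : Fin n → P) g => (‖interpErase x τ c i ω g‖ ^ 2 + τ ^ 2 * finrank ℝ E) ^ k)
      ≤ mean fun (ω : Fin n → P) g => (‖interp x τ c ω g‖ ^ 2) ^ k := by
  have pk : ∀ (ω : Fin n → P), PolyGrowth fun g => (‖interp x τ c ω g‖ ^ 2) ^ k :=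
    fun ω => (PolyGrowth.norm_interp_sq x τ c ω).pow k
  rw [mean_update pk i]
  refine mean_mono (fun ω => ((PolyGrowth.norm_interpErase_sq x τ c i ω).add (PolyGrowth.const _)).pow k)
    (fun ω => PolyGrowth.expect fun p => pk _) fun ω g => ?_
  simp only [hx.norm_interp_update_sq]
  exact pow_le_expect_affine (hx.moment_one _) (hx.moment_two _) (hx.moment_three _) (sq_nonneg _)
    (by positivity) τ hk

theorem IsDesign.mean_norm_sq_le (hx : IsDesign x) (h : n * τ ^ 2 + c ^ 2 = 1) :
    mean (fun (ω : Fin n → P) g => ‖interp x τ c ω g‖ ^ 2) ≤ finrank ℝ E := by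
  simpa using hx.mean_pow_succ_le h (k := 0) (by norm_num)

theorem IsDesign.mean_norm_sq_sq_le (hx : IsDesign x) (h : n * τ ^ 2 + c ^ 2 = 1) :
    mean (fun (ω : Fin n → P) g => (‖interp x τ c ω g‖ ^ 2) ^ 2)
      ≤ (finrank ℝ E + 2) * finrank ℝ E := by
  have h2 := hx.mean_pow_succ_le h (k := 1) (by norm_num)
  simp only [pow_one, Nat.cast_one, mul_one] at h2
  exact h2.trans (mul_le_mul_of_nonneg_left (hx.mean_norm_sq_le h) (by positivity))

theorem IsDesign.mean_norm_sq_cube_le (hx : IsDesign x) (h : n * τ ^ 2 + c ^ 2 = 1) :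
    mean (fun (ω : Fin n → P) g => (‖interp x τ c ω g‖ ^ 2) ^ 3)
      ≤ (finrank ℝ E + 4) * ((finrank ℝ E + 2) * finrank ℝ E) := by
  have h2 := hx.mean_pow_succ_le h (k := 2) le_rfl
  refine h2.trans ?_
  push_cast
  rw [show (2 : ℝ) * 2 = 4 by norm_num]
  exact mul_le_mul_of_nonneg_left (hx.mean_norm_sq_sq_le h) (by positivity)

end Design

namespace SmoothStep

variable {E : Type*} [NormedAddCommGroup E] {a s : ℝ} (S : SmoothStep a s)

theorem continuous_f : Continuous S.f := continuous_iff_continuousAt.2 fun x => (S.hf x).continuousAt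
theorem continuous_f₁ : Continuous S.f₁ := continuous_iff_continuousAt.2 fun x => (S.hf₁ x).continuousAt
theorem continuous_f₂ : Continuous S.f₂ := continuous_iff_continuousAt.2 fun x => (S.hf₂ x).continuousAt
theorem continuous_χ : Continuous S.χ := continuous_iff_continuousAt.2 fun x => (S.hχ x).continuousAt

theorem χ₁_nonneg (x : ℝ) : 0 ≤ S.χ₁ x := (abs_nonneg _).trans (S.f₄_le x)

theorem polyGrowth_f {u : E → ℝ} (hu : Continuous u) : PolyGrowth fun x => S.f (u x) :=
  .of_bounded (K := 1) (S.continuous_f.comp hu) fun x =>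
    abs_le.2 ⟨by linarith [(S.f_mem (u x)).1], (S.f_mem (u x)).2⟩

theorem polyGrowth_f₁ {u : E → ℝ} (hu : Continuous u) : PolyGrowth fun x => S.f₁ (u x) :=
  .of_bounded (S.continuous_f₁.comp hu) fun x => S.f₁_le (u x)

theorem polyGrowth_f₂ {u : E → ℝ} (hu : Continuous u) : PolyGrowth fun x => S.f₂ (u x) :=
  .of_bounded (S.continuous_f₂.comp hu) fun x => S.f₂_le (u x)

theorem polyGrowth_χ {u : E → ℝ} (hu : Continuous u) : PolyGrowth fun x => S.χ (u x) :=
  .of_bounded (S.continuous_χ.comp hu) fun x => S.χ_le (u x)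

theorem polyGrowth_χ₁ {u : E → ℝ} (hu : Continuous u) : PolyGrowth fun x => S.χ₁ (u x) :=
  .of_bounded (S.continuous_χ₁.comp hu) fun x => by
    rw [abs_of_nonneg (S.χ₁_nonneg _)]; exact S.χ₁_le (u x)

end SmoothStep

section Localization

open Module

variable {E : Type*} [NormedAddCommGroup E] [InnerProductSpace ℝ E] [FiniteDimensional ℝ E]
  [MeasurableSpace E] [BorelSpace E] {a s : ℝ} (S : SmoothStep a s)

theorem integral_norm_affine_sq (w : E) (c : ℝ) :
    ∫ x, ‖w + c • x‖ ^ 2 ∂gauss E = ‖w‖ ^ 2 + c ^ 2 * finrank ℝ E := by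
  simp only [norm_affine_sq]
  have h1 : Integrable (fun x : E => ‖w‖ ^ 2 + 2 * c * inner ℝ w x) (gauss E) :=
    ((PolyGrowth.const _).add ((PolyGrowth.inner_left w).const_mul _)).integrable
  rw [integral_add h1 (PolyGrowth.norm_sq.const_mul _).integrable,
    integral_add (integrable_const _) ((PolyGrowth.inner_left w).const_mul _).integrable,
    integral_const_mul, integral_const_mul, integral_inner_gauss, integral_norm_sq_gauss]
  simp

theorem integral_inner_affine_sub_sq (w : E) (c : ℝ) :
    ∫ x, (inner ℝ (w + c • x) x - c * finrank ℝ E) ^ 2 ∂gauss E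
      = (∫ x, ‖w + c • x‖ ^ 2 ∂gauss E) + c ^ 2 * finrank ℝ E := by
  have e : ∀ x : E, (inner ℝ (w + c • x) x - c * finrank ℝ E) ^ 2
      = inner ℝ w x ^ 2 + 2 * c * (‖x‖ ^ 2 * inner ℝ w x) - 2 * c * finrank ℝ E * inner ℝ w x
        + c ^ 2 * (‖x‖ ^ 2) ^ 2 - 2 * c ^ 2 * finrank ℝ E * ‖x‖ ^ 2 + c ^ 2 * (finrank ℝ E : ℝ) ^ 2 :=
    fun x => by
      rw [inner_add_left, inner_smul_left, real_inner_self_eq_norm_sq]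
      simp only [conj_trivial]
      ring
  have p1 : PolyGrowth fun x : E => inner ℝ w x := PolyGrowth.inner_left w
  have p2 : PolyGrowth fun x : E => ‖x‖ ^ 2 := PolyGrowth.norm_sq
  have q1 := p1.pow 2
  have q2 := (p2.mul p1).const_mul (2 * c)
  have q3 := p1.const_mul (2 * c * finrank ℝ E)
  have q4 := (p2.pow 2).const_mul (c ^ 2)
  have q5 := p2.const_mul (2 * c ^ 2 * finrank ℝ E)
  simp only [e, integral_norm_affine_sq]
  rw [integral_add ((((q1.add q2).sub q3).add q4).sub q5).integrable (integrable_const _),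
    integral_sub (((q1.add q2).sub q3).add q4).integrable q5.integrable,
    integral_add ((q1.add q2).sub q3).integrable q4.integrable,
    integral_sub (q1.add q2).integrable q3.integrable,
    integral_add q1.integrable q2.integrable]
  simp only [integral_const_mul, integral_inner_gauss, integral_norm_sq_gauss,
    integral_inner_sq_gauss, integral_inner_mul_norm_sq_gauss, integral_norm_pow_four_gauss]
  simp
  ring

/-- The Gaussian mass of the transition region, weighted by the squared norm. -/
theorem SmoothStep.integral_χ₁_le (hs : 0 < s) (w : E) {c k : ℝ} (hc : 0 ≤ c) (hk : 0 ≤ k)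
    (hd : 0 < finrank ℝ E) :
    2 * c * ∫ x, S.χ₁ (‖w + c • x‖ ^ 2 + k) * ((‖w + c • x‖ ^ 2 + k) * ‖w + c • x‖ ^ 2) ∂gauss E
      ≤ 4 * s⁻¹ ^ 3 * ((∫ x, (‖w + c • x‖ ^ 2 + k) ^ 2 ∂gauss E) / (2 * √(finrank ℝ E))
        + √(finrank ℝ E) / 2 * ((∫ x, ‖w + c • x‖ ^ 2 ∂gauss E) + c ^ 2 * finrank ℝ E)
        + 2 * c * ∫ x, ‖w + c • x‖ ^ 2 ∂gauss E) := by
  rw [← integral_inner_affine_sub_sq]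
  have hq : 0 < s⁻¹ := inv_pos.2 hs
  have he : 0 < √(finrank ℝ E) := Real.sqrt_pos.2 (by exact_mod_cast hd)
  set e := √(finrank ℝ E)
  have pB : PolyGrowth fun x : E => ‖w + c • x‖ ^ 2 := PolyGrowth.norm_affine_sq w c
  have pb : PolyGrowth fun x : E => ‖w + c • x‖ ^ 2 + k := pB.add (.const k)
  have pχ := S.polyGrowth_χ pb.1
  have pχ₁ := S.polyGrowth_χ₁ pb.1
  have pI : PolyGrowth fun x : E => inner ℝ (w + c • x) x := PolyGrowth.inner_affine w c
  have pD : PolyGrowth fun x : E => (inner ℝ (w + c • x) x - c * finrank ℝ E) ^ 2 :=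
    (pI.sub (.const _)).pow 2
  have key := integral_radial_mul_inner (E := E) (φ := fun t => S.χ (t + k) * (t + k))
    (φ' := fun t => S.χ₁ (t + k) * (t + k) + S.χ (t + k)) (fun t => by
      have := ((S.hχ (t + k)).comp_add_const t k).mul ((hasDerivAt_id t).add_const k)
      exact this.congr_deriv (by simp)) w c (pχ.mul pb) ((pχ₁.mul pb).add pχ)
  have e1 : 2 * c * ∫ x, S.χ₁ (‖w + c • x‖ ^ 2 + k) * ((‖w + c • x‖ ^ 2 + k) * ‖w + c • x‖ ^ 2) ∂gauss E
      = ∫ x, S.χ (‖w + c • x‖ ^ 2 + k) * ((‖w + c • x‖ ^ 2 + k)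
        * (inner ℝ (w + c • x) x - c * finrank ℝ E) - 2 * c * ‖w + c • x‖ ^ 2) ∂gauss E := by
    have i1 := (pχ.mul pb).mul pI
    have i2 := (((pχ.mul pb).const_mul (finrank ℝ E)).add ((((pχ₁.mul pb).add pχ).const_mul 2).mul pB)).const_mul c
    have i3 := ((pχ₁.mul (pb.mul pB)).const_mul (2 * c)).integrable
    rw [← integral_const_mul] at key ⊢
    rw [← sub_eq_zero, ← integral_sub i1.integrable i2.integrable] at key
    rw [← add_zero (∫ x, _ ∂_), ← key, ← integral_add i3 (i1.sub i2).integrable]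
    refine integral_congr_ae (ae_of_all _ fun x => ?_)
    ring
  have pR1 := (pb.pow 2).const_mul (2 * e)⁻¹
  have pR2 := pD.const_mul (e / 2)
  have pR3 := pB.const_mul (2 * c)
  have e2 : ∫ x, 4 * s⁻¹ ^ 3 * ((2 * e)⁻¹ * (‖w + c • x‖ ^ 2 + k) ^ 2
      + e / 2 * (inner ℝ (w + c • x) x - c * finrank ℝ E) ^ 2 + 2 * c * ‖w + c • x‖ ^ 2) ∂gauss E
      = 4 * s⁻¹ ^ 3 * ((∫ x, (‖w + c • x‖ ^ 2 + k) ^ 2 ∂gauss E) / (2 * e)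
        + e / 2 * (∫ x, (inner ℝ (w + c • x) x - c * finrank ℝ E) ^ 2 ∂gauss E)
        + 2 * c * ∫ x, ‖w + c • x‖ ^ 2 ∂gauss E) := by
    rw [integral_const_mul, integral_add (pR1.add pR2).integrable pR3.integrable,
      integral_add pR1.integrable pR2.integrable, integral_const_mul, integral_const_mul,
      integral_const_mul]
    ring
  rw [e1, ← e2]
  have pL := pχ.mul ((pb.mul (pI.sub (.const (c * finrank ℝ E)))).sub (pB.const_mul (2 * c)))
  have pR := ((pR1.add pR2).add pR3).const_mul (4 * s⁻¹ ^ 3)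
  refine integral_mono pL.integrable pR.integrable fun x => ?_
  beta_reduce
  have hB : 0 ≤ ‖w + c • x‖ ^ 2 := by positivity
  generalize ‖w + c • x‖ ^ 2 = B at *
  generalize inner ℝ (w + c • x) x - c * finrank ℝ E = D
  refine (le_abs_self _).trans ?_
  rw [abs_mul]
  refine mul_le_mul (S.χ_le _) ?_ (abs_nonneg _) (by positivity)
  have h1 : |(B + k) * D| ≤ (2 * e)⁻¹ * (B + k) ^ 2 + e / 2 * D ^ 2 := by
    rw [abs_mul, abs_of_nonneg (by positivity : 0 ≤ B + k), ← sq_abs D]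
    have h2 : 0 ≤ ((B + k) - e * |D|) ^ 2 / (2 * e) := by positivity
    have h3 : ((B + k) - e * |D|) ^ 2 / (2 * e)
      = (2 * e)⁻¹ * (B + k) ^ 2 + e / 2 * |D| ^ 2 - (B + k) * |D| := by field_simp; ring
    linarith
  have h4 : |2 * c * B| = 2 * c * B := abs_of_nonneg (by positivity)
  have := abs_sub ((B + k) * D) (2 * c * B)
  linarith

variable {P : Type*} [Fintype P] [Nonempty P] {n : ℕ} {x : P → E} {τ c : ℝ}

theorem IsDesign.mean_χ₁_le (hx : IsDesign x) (hs : 0 < s) (h : n * τ ^ 2 + c ^ 2 = 1) (hc : 0 ≤ c)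
    (hd : 3 ≤ finrank ℝ E) (i : Fin n) :
    c * mean (fun (ω : Fin n → P) g => S.χ₁ (‖interpErase x τ c i ω g‖ ^ 2 + τ ^ 2 * finrank ℝ E)
      * ((‖interpErase x τ c i ω g‖ ^ 2 + τ ^ 2 * finrank ℝ E) * ‖interpErase x τ c i ω g‖ ^ 2))
      ≤ 6 * s⁻¹ ^ 3 * √(finrank ℝ E) ^ 3 := by
  have hq : 0 < s⁻¹ := inv_pos.2 hs
  have hd' : (3 : ℝ) ≤ finrank ℝ E := by exact_mod_cast hd
  set e := √(finrank ℝ E) with he_def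
  have he : 0 < e := Real.sqrt_pos.2 (by linarith)
  have hee : e ^ 2 = finrank ℝ E := Real.sq_sqrt (by positivity)
  have he3 : 1.73 ≤ e := Real.le_sqrt_of_sq_le (by norm_num; linarith)
  have hB : mean (fun (ω : Fin n → P) g => ‖interpErase x τ c i ω g‖ ^ 2) ≤ finrank ℝ E := by
    have h1 := (hx.mean_erase_pow_le (c := c) (τ := τ) i (k := 1) (by norm_num)).trans
      (by simpa using hx.mean_norm_sq_le h)
    refine le_trans (mean_mono (PolyGrowth.norm_interpErase_sq x τ c i)
      (fun ω => ((PolyGrowth.norm_interpErase_sq x τ c i ω).add (.const _)).pow 1) fun ω g => ?_) h1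
    have : 0 ≤ τ ^ 2 * (finrank ℝ E : ℝ) := by positivity
    linarith
  have hb : mean (fun (ω : Fin n → P) g => (‖interpErase x τ c i ω g‖ ^ 2 + τ ^ 2 * finrank ℝ E) ^ 2)
      ≤ 5 / 3 * e ^ 4 := by
    refine ((hx.mean_erase_pow_le i (k := 2) (by norm_num)).trans (hx.mean_norm_sq_sq_le h)).trans ?_
    rw [show e ^ 4 = (e ^ 2) ^ 2 by ring, hee]
    nlinarith
  have hc1 : c ≤ 1 := by nlinarith [sq_nonneg τ, (Nat.cast_nonneg n : (0 : ℝ) ≤ n)]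
  have key : 2 * c * mean (fun (ω : Fin n → P) g => S.χ₁ (‖interpErase x τ c i ω g‖ ^ 2 + τ ^ 2 * finrank ℝ E)
      * ((‖interpErase x τ c i ω g‖ ^ 2 + τ ^ 2 * finrank ℝ E) * ‖interpErase x τ c i ω g‖ ^ 2))
      ≤ 4 * s⁻¹ ^ 3 * (mean (fun (ω : Fin n → P) g =>
          (‖interpErase x τ c i ω g‖ ^ 2 + τ ^ 2 * finrank ℝ E) ^ 2) / (2 * e)
        + e / 2 * (mean (fun (ω : Fin n → P) g => ‖interpErase x τ c i ω g‖ ^ 2) + c ^ 2 * finrank ℝ E)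
        + 2 * c * mean (fun (ω : Fin n → P) g => ‖interpErase x τ c i ω g‖ ^ 2)) := by
    unfold mean
    have e1 : (c ^ 2 * finrank ℝ E : ℝ) = 𝔼 _ω : Fin n → P, (c ^ 2 * finrank ℝ E : ℝ) :=
      (expect_const univ_nonempty _).symm
    rw [e1, expect_div, ← expect_add_distrib, mul_expect, mul_expect, mul_expect,
      ← expect_add_distrib, ← expect_add_distrib, mul_expect]
    exact expect_le_expect fun ω _ => S.integral_χ₁_le hs _ hc (by positivity) (lt_of_lt_of_le (by norm_num) hd)
  generalize mean (fun (ω : Fin n → P) g => S.χ₁ (‖interpErase x τ c i ω g‖ ^ 2 + τ ^ 2 * finrank ℝ E)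
      * ((‖interpErase x τ c i ω g‖ ^ 2 + τ ^ 2 * finrank ℝ E) * ‖interpErase x τ c i ω g‖ ^ 2)) = X at *
  generalize mean (fun (ω : Fin n → P) g =>
    (‖interpErase x τ c i ω g‖ ^ 2 + τ ^ 2 * finrank ℝ E) ^ 2) = Y at *
  rw [← hee] at hB key
  generalize mean (fun (ω : Fin n → P) g => ‖interpErase x τ c i ω g‖ ^ 2) = V at *
  have k1 : Y / (2 * e) ≤ 5 / 6 * e ^ 3 := by
    rw [div_le_iff₀ (by positivity)]; linarith
  have k2 : e / 2 * (V + c ^ 2 * e ^ 2) ≤ e / 2 * (e ^ 2 + 1 * e ^ 2) := by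
    have : c ^ 2 ≤ 1 := by nlinarith
    gcongr
  have k3 : 2 * c * V ≤ 2 * e ^ 2 := by nlinarith [sq_nonneg e]
  have k4 : 2 * e ^ 2 ≤ 1.16 * e ^ 3 := by nlinarith [sq_nonneg e]
  have k5 : 4 * s⁻¹ ^ 3 * (Y / (2 * e) + e / 2 * (V + c ^ 2 * e ^ 2) + 2 * c * V)
      ≤ 4 * s⁻¹ ^ 3 * (3 * e ^ 3) := by
    have : 0 ≤ e ^ 3 := by positivity
    gcongr
    linarith
  linarith

end Localization

section Interpolation

open Module

variable {E : Type*} [NormedAddCommGroup E] [InnerProductSpace ℝ E] {P : Type*} {n : ℕ}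

theorem continuous_interp (x : P → E) (τ c : ℝ) (ω : Fin n → P) : Continuous (interp x τ c ω) := by
  unfold interp; fun_prop

theorem abs_inner_comb_le (v g : E) {p q : ℝ} (hp : |p| ≤ 1) (hq : |q| ≤ 1) {p' q' : ℝ} (hp' : |p'| ≤ 1)
    (hq' : |q'| ≤ 1) : |inner ℝ (p • v + q • g) (p' • v + q' • g)| ≤ 2 * ‖v‖ ^ 2 + 2 * ‖g‖ ^ 2 := by
  have h : ∀ {p q : ℝ}, |p| ≤ 1 → |q| ≤ 1 → ‖p • v + q • g‖ ≤ ‖v‖ + ‖g‖ := fun hp hq => by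
    refine (norm_add_le _ _).trans ?_
    rw [norm_smul, norm_smul, Real.norm_eq_abs, Real.norm_eq_abs]
    exact add_le_add (mul_le_of_le_one_left (norm_nonneg _) hp)
      (mul_le_of_le_one_left (norm_nonneg _) hq)
  calc _ ≤ _ := abs_real_inner_le_norm _ _
    _ ≤ (‖v‖ + ‖g‖) * (‖v‖ + ‖g‖) :=
        mul_le_mul (h hp hq) (h hp' hq') (norm_nonneg _) (by positivity)
    _ ≤ _ := by nlinarith [sq_nonneg (‖v‖ - ‖g‖)]

variable [FiniteDimensional ℝ E] [MeasurableSpace E] [BorelSpace E] {a s : ℝ} (S : SmoothStep a s)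
  [Fintype P] {x : P → E}

variable (x) in
/-- Derivative of the interpolated expectation. -/
theorem hasDerivAt_mean_interp (t θ : ℝ) :
    HasDerivAt (fun θ => mean fun (ω : Fin n → P) g => S.f (‖interp x (sin θ * t) (cos θ) ω g‖ ^ 2))
      (mean fun (ω : Fin n → P) g => S.f₁ (‖interp x (sin θ * t) (cos θ) ω g‖ ^ 2)
        * (2 * inner ℝ (interp x (sin θ * t) (cos θ) ω g) (interp x (cos θ * t) (-sin θ) ω g))) θ := by
  have hint : ∀ (τ c : ℝ) (ω : Fin n → P), PolyGrowth fun g => S.f (‖interp x τ c ω g‖ ^ 2) :=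
    fun τ c ω => S.polyGrowth_f ((continuous_interp x τ c ω).norm.pow 2)
  have key : ∀ ω : Fin n → P, HasDerivAt (fun θ => ∫ g, S.f (‖interp x (sin θ * t) (cos θ) ω g‖ ^ 2) ∂gauss E)
      (∫ g, S.f₁ (‖interp x (sin θ * t) (cos θ) ω g‖ ^ 2)
        * (2 * inner ℝ (interp x (sin θ * t) (cos θ) ω g) (interp x (cos θ * t) (-sin θ) ω g)) ∂gauss E) θ := by
    intro ω
    set v : E := t • ∑ i, x (ω i) with hv
    have hi : ∀ p q g, interp x (p * t) q ω g = p • v + q • g := fun p q g => by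
      simp only [interp, hv, smul_smul]
    have hcont : Continuous fun g : E => S.f₁ (‖interp x (sin θ * t) (cos θ) ω g‖ ^ 2)
        * (2 * inner ℝ (interp x (sin θ * t) (cos θ) ω g) (interp x (cos θ * t) (-sin θ) ω g)) :=
      (S.continuous_f₁.comp ((continuous_interp x _ _ ω).norm.pow 2)).mul
        (continuous_const.mul ((continuous_interp x _ _ ω).inner (continuous_interp x _ _ ω)))
    have hb : PolyGrowth fun g : E => s⁻¹ * (2 * (2 * ‖v‖ ^ 2 + 2 * ‖g‖ ^ 2)) :=
      (((PolyGrowth.const _).add (PolyGrowth.norm_sq.const_mul 2)).const_mul 2).const_mul _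
    refine (hasDerivAt_integral_of_dominated_loc_of_deriv_le (μ := gauss E) (s := Set.univ)
      (bound := fun g : E => s⁻¹ * (2 * (2 * ‖v‖ ^ 2 + 2 * ‖g‖ ^ 2)))
      (F := fun θ g => S.f (‖interp x (sin θ * t) (cos θ) ω g‖ ^ 2))
      (F' := fun θ g => S.f₁ (‖interp x (sin θ * t) (cos θ) ω g‖ ^ 2)
        * (2 * inner ℝ (interp x (sin θ * t) (cos θ) ω g) (interp x (cos θ * t) (-sin θ) ω g)))
      Filter.univ_mem (.of_forall fun θ => (hint _ _ ω).1.aestronglyMeasurable)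
      (hint _ _ ω).integrable hcont.aestronglyMeasurable (ae_of_all _ fun g θ _ => ?_)
      hb.integrable (ae_of_all _ fun g θ _ => ?_)).2
    · rw [Real.norm_eq_abs, abs_mul, abs_mul, abs_two, hi, hi]
      have hs1 := abs_sin_le_one θ
      have hc1 := abs_cos_le_one θ
      exact mul_le_mul (S.f₁_le _) (mul_le_mul_of_nonneg_left
        (abs_inner_comb_le v g hs1 hc1 hc1 (by rwa [abs_neg])) two_pos.le) (by positivity)
        ((abs_nonneg _).trans (S.f₁_le 0))
    · simp only [hi]
      have h1 : HasDerivAt (fun θ => sin θ • v + cos θ • g) (cos θ • v + (-sin θ) • g) θ :=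
        ((hasDerivAt_sin θ).smul_const v).add ((hasDerivAt_cos θ).smul_const g)
      exact (S.hf _).comp θ h1.norm_sq
  unfold mean
  simp only [Fintype.expect_eq_sum_div_card]
  exact (HasDerivAt.fun_sum fun ω _ => key ω).div_const _

variable [Nonempty P]

/-- The derivative of the interpolated expectation as a sum of one-step comparisons. -/
theorem IsDesign.mean_deriv_eq (hx : IsDesign x) {t σ c : ℝ} (ht : n * t ^ 2 = 1) (hτ : σ * t ≠ 0) :
    mean (fun (ω : Fin n → P) g => S.f₁ (‖interp x (σ * t) c ω g‖ ^ 2)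
        * (2 * inner ℝ (interp x (σ * t) c ω g) (interp x (c * t) (-σ) ω g)))
      = ∑ i, 2 * c * σ * t ^ 2 * mean fun (ω : Fin n → P) g => 𝔼 p,
        (S.f₁ (‖interpErase x (σ * t) c i ω g‖ ^ 2 + (σ * t) ^ 2 * finrank ℝ E
            + 2 * (σ * t) * inner ℝ (interpErase x (σ * t) c i ω g) (x p))
          * inner ℝ (interpErase x (σ * t) c i ω g) (x p) / (σ * t)
          - 2 * (‖interpErase x (σ * t) c i ω g‖ ^ 2 + (σ * t) ^ 2 * finrank ℝ E
            + 2 * (σ * t) * inner ℝ (interpErase x (σ * t) c i ω g) (x p))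
          * S.f₂ (‖interpErase x (σ * t) c i ω g‖ ^ 2 + (σ * t) ^ 2 * finrank ℝ E
            + 2 * (σ * t) * inner ℝ (interpErase x (σ * t) c i ω g) (x p))) := by
  set τ := σ * t with hτ_def
  have pF : ∀ ω : Fin n → P, PolyGrowth fun g => ‖interp x τ c ω g‖ ^ 2 :=
    PolyGrowth.norm_interp_sq x τ c
  have p1 : ∀ ω : Fin n → P, PolyGrowth fun g => S.f₁ (‖interp x τ c ω g‖ ^ 2) := fun ω =>
    S.polyGrowth_f₁ (pF ω).1
  have p2 : ∀ ω : Fin n → P, PolyGrowth fun g => S.f₂ (‖interp x τ c ω g‖ ^ 2) := fun ω =>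
    S.polyGrowth_f₂ (pF ω).1
  have pI : ∀ ω : Fin n → P, PolyGrowth fun g => inner ℝ (interp x τ c ω g) g := fun ω =>
    PolyGrowth.inner_affine _ _
  have pX : ∀ (i : Fin n) (ω : Fin n → P), PolyGrowth fun g =>
      S.f₁ (‖interp x τ c ω g‖ ^ 2) * inner ℝ (interp x τ c ω g) (x (ω i)) := fun i ω =>
    (p1 ω).mul (PolyGrowth.inner_interp x τ c _ ω)
  have pG : ∀ ω : Fin n → P, PolyGrowth fun g => finrank ℝ E * S.f₁ (‖interp x τ c ω g‖ ^ 2)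
      + 2 * S.f₂ (‖interp x τ c ω g‖ ^ 2) * ‖interp x τ c ω g‖ ^ 2 := fun ω =>
    ((p1 ω).const_mul _).add (((p2 ω).const_mul 2).mul (pF ω))
  set M := mean fun (ω : Fin n → P) g => finrank ℝ E * S.f₁ (‖interp x τ c ω g‖ ^ 2)
      + 2 * S.f₂ (‖interp x τ c ω g‖ ^ 2) * ‖interp x τ c ω g‖ ^ 2 with hM
  have eG : mean (fun (ω : Fin n → P) g => S.f₁ (‖interp x τ c ω g‖ ^ 2) * inner ℝ (interp x τ c ω g) g)
      = c * M := by
    rw [hM, ← mean_const_mul]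
    unfold mean
    refine expect_congr rfl fun ω _ => ?_
    rw [integral_const_mul]
    exact integral_radial_mul_inner S.hf₁ (τ • ∑ i, x (ω i)) c (p1 ω) (p2 ω)
  have e1 : mean (fun (ω : Fin n → P) g => S.f₁ (‖interp x τ c ω g‖ ^ 2)
        * (2 * inner ℝ (interp x τ c ω g) (interp x (c * t) (-σ) ω g)))
      = (∑ i : Fin n, 2 * c * t * mean fun (ω : Fin n → P) g =>
          S.f₁ (‖interp x τ c ω g‖ ^ 2) * inner ℝ (interp x τ c ω g) (x (ω i)))
        - 2 * σ * (c * M) := by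
    rw [← eG, ← mul_sum, ← mean_sum _ fun i _ => pX i, ← mean_const_mul, ← mean_const_mul,
      ← mean_sub (fun ω => (PolyGrowth.sum _ fun i _ => pX i ω).const_mul _)
        fun ω => ((p1 ω).mul (pI ω)).const_mul _]
    congr 1
    funext ω g
    rw [← mul_sum, ← inner_sum, show interp x (c * t) (-σ) ω g = (c * t) • ∑ i, x (ω i) + (-σ) • g from rfl,
      inner_add_right, inner_smul_right, inner_smul_right]
    ring
  have e2 : 2 * σ * (c * M) = ∑ i : Fin n, 2 * c * t * (τ * M) := by
    simp only [sum_const, card_univ, Fintype.card_fin, nsmul_eq_mul, hτ_def]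
    linear_combination (-2 * σ * c * M) * ht
  rw [e1, e2, ← sum_sub_distrib]
  refine sum_congr rfl fun i _ => ?_
  rw [← mul_sub, hM, ← mean_const_mul, ← mean_sub (pX i) fun ω => (pG ω).const_mul _,
    mean_update (fun ω => (pX i ω).sub ((pG ω).const_mul _)) i,
    show 2 * c * σ * t ^ 2 = 2 * c * t * τ by rw [hτ_def]; ring, mul_assoc _ τ, ← mean_const_mul (c := τ)]
  congr 2
  funext ω g
  rw [mul_expect]
  refine expect_congr rfl fun p _ => ?_
  simp only [Function.update_self, hx.norm_interp_update_sq, hx.inner_interp_update]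
  field_simp
  ring

end Interpolation

section SmoothBound

open Module

variable {E : Type*} [NormedAddCommGroup E] [InnerProductSpace ℝ E] [FiniteDimensional ℝ E]
  [MeasurableSpace E] [BorelSpace E] {a s : ℝ} (S : SmoothStep a s)
  {P : Type*} [Fintype P] [Nonempty P] {n : ℕ} {x : P → E}

/-- Bound for a single step of the comparison, away from the localized fourth-derivative term. -/
noncomputable def stepBound (s t e : ℝ) : ℝ :=
  t ^ 2 * (2 * e ^ 2 * s⁻¹ ^ 2 + 16 * e ^ 2 * s⁻¹ ^ 3) + 3154 * s⁻¹ ^ 5 * t ^ 3 * e ^ 5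
    + 2560 * s⁻¹ ^ 5 * t ^ 4 * e ^ 4

theorem IsDesign.abs_mean_step_le (hx : IsDesign x) (hs : 0 < s) {τ c : ℝ} (hτ : 0 < τ) (hc : 0 ≤ c)
    (h : n * τ ^ 2 + c ^ 2 = 1) (hd : 3 ≤ finrank ℝ E) (i : Fin n) :
    c * |mean fun (ω : Fin n → P) g => 𝔼 p,
        (S.f₁ (‖interpErase x τ c i ω g‖ ^ 2 + τ ^ 2 * finrank ℝ E
            + 2 * τ * inner ℝ (interpErase x τ c i ω g) (x p))
          * inner ℝ (interpErase x τ c i ω g) (x p) / τ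
          - 2 * (‖interpErase x τ c i ω g‖ ^ 2 + τ ^ 2 * finrank ℝ E
            + 2 * τ * inner ℝ (interpErase x τ c i ω g) (x p))
          * S.f₂ (‖interpErase x τ c i ω g‖ ^ 2 + τ ^ 2 * finrank ℝ E
            + 2 * τ * inner ℝ (interpErase x τ c i ω g) (x p)))|
      ≤ c * stepBound s τ √(finrank ℝ E) + 120 * τ ^ 2 * s⁻¹ ^ 3 * √(finrank ℝ E) ^ 3 := by
  have hq : 0 < s⁻¹ := inv_pos.2 hs
  have hd' : (3 : ℝ) ≤ finrank ℝ E := by exact_mod_cast hd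
  have hχ := hx.mean_χ₁_le S hs h hc hd i
  set D : ℝ := (finrank ℝ E : ℝ) with hD
  set e := √D with he_def
  have he : 0 < e := Real.sqrt_pos.2 (by linarith)
  have hee : e ^ 2 = D := Real.sq_sqrt (by linarith)
  have pB : ∀ ω : Fin n → P, PolyGrowth fun g => ‖interpErase x τ c i ω g‖ ^ 2 :=
    PolyGrowth.norm_interpErase_sq x τ c i
  have pb : ∀ ω : Fin n → P, PolyGrowth fun g => ‖interpErase x τ c i ω g‖ ^ 2 + τ ^ 2 * D :=
    fun ω => (pB ω).add (PolyGrowth.const _)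
  have pχ : ∀ ω : Fin n → P, PolyGrowth fun g => S.χ₁ (‖interpErase x τ c i ω g‖ ^ 2 + τ ^ 2 * D)
      * ((‖interpErase x τ c i ω g‖ ^ 2 + τ ^ 2 * D) * ‖interpErase x τ c i ω g‖ ^ 2) := fun ω =>
    (S.polyGrowth_χ₁ (pb ω).1).mul ((pb ω).mul (pB ω))
  have pL : ∀ (p : P) (ω : Fin n → P), PolyGrowth fun g => inner ℝ (interpErase x τ c i ω g) (x p) := by
    intro p ω
    unfold interpErase
    simp only [real_inner_comm (x p), inner_add_right, inner_smul_right]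
    exact (PolyGrowth.const _).add ((PolyGrowth.inner_left (x p)).const_mul _)
  have pu : ∀ (p : P) (ω : Fin n → P), PolyGrowth fun g => ‖interpErase x τ c i ω g‖ ^ 2 + τ ^ 2 * D
      + 2 * τ * inner ℝ (interpErase x τ c i ω g) (x p) := fun p ω => (pb ω).add ((pL p ω).const_mul _)
  have b1 : mean (fun (ω : Fin n → P) g => ‖interpErase x τ c i ω g‖ ^ 2 + τ ^ 2 * D) ≤ D := by
    have := hx.mean_erase_pow_le (τ := τ) (c := c) i (k := 1) (by norm_num)
    simp only [pow_one] at this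
    exact this.trans (hx.mean_norm_sq_le h)
  have b2 : mean (fun (ω : Fin n → P) g => (‖interpErase x τ c i ω g‖ ^ 2 + τ ^ 2 * D) ^ 2)
      ≤ 5 / 3 * D ^ 2 := by
    refine ((hx.mean_erase_pow_le i (by norm_num)).trans (hx.mean_norm_sq_sq_le h)).trans ?_
    nlinarith
  have b3 : mean (fun (ω : Fin n → P) g => (‖interpErase x τ c i ω g‖ ^ 2 + τ ^ 2 * D) ^ 3)
      ≤ 35 / 9 * D ^ 3 := by
    refine ((hx.mean_erase_pow_le i le_rfl).trans (hx.mean_norm_sq_cube_le h)).trans ?_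
    rw [← hD]
    nlinarith [mul_nonneg (mul_nonneg (sub_nonneg.2 hd') (sub_nonneg.2 hd')) (by linarith : 0 ≤ D),
      mul_nonneg (sub_nonneg.2 hd') (by linarith : 0 ≤ D)]
  have key : |mean fun (ω : Fin n → P) g => 𝔼 p,
        (S.f₁ (‖interpErase x τ c i ω g‖ ^ 2 + τ ^ 2 * D
            + 2 * τ * inner ℝ (interpErase x τ c i ω g) (x p))
          * inner ℝ (interpErase x τ c i ω g) (x p) / τ
          - 2 * (‖interpErase x τ c i ω g‖ ^ 2 + τ ^ 2 * D
            + 2 * τ * inner ℝ (interpErase x τ c i ω g) (x p))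
          * S.f₂ (‖interpErase x τ c i ω g‖ ^ 2 + τ ^ 2 * D
            + 2 * τ * inner ℝ (interpErase x τ c i ω g) (x p)))|
      ≤ mean fun (ω : Fin n → P) g => 2 * τ ^ 2 * D * s⁻¹ ^ 2
        + 16 * τ ^ 2 * s⁻¹ ^ 3 * (‖interpErase x τ c i ω g‖ ^ 2 + τ ^ 2 * D)
        + 20 * τ ^ 2 * (S.χ₁ (‖interpErase x τ c i ω g‖ ^ 2 + τ ^ 2 * D)
          * ((‖interpErase x τ c i ω g‖ ^ 2 + τ ^ 2 * D) * ‖interpErase x τ c i ω g‖ ^ 2))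
        + (s⁻¹ ^ 5 * τ ^ 3 * 896 * e + 1536 * s⁻¹ ^ 5 * τ ^ 4)
          * (‖interpErase x τ c i ω g‖ ^ 2 + τ ^ 2 * D) ^ 2
        + s⁻¹ ^ 5 * τ ^ 3 * 427 / e * (‖interpErase x τ c i ω g‖ ^ 2 + τ ^ 2 * D) ^ 3 := by
    refine abs_mean_le (fun ω => PolyGrowth.expect fun p => ?_) (fun ω => ?_) fun ω g => ?_
    · simp only [div_eq_inv_mul]
      exact ((((S.polyGrowth_f₁ (pu p ω).1).mul (pL p ω)).const_mul _).sub
        (((pu p ω).const_mul 2).mul (S.polyGrowth_f₂ (pu p ω).1)))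
    · exact (((((PolyGrowth.const _).add ((pb ω).const_mul _)).add ((pχ ω).const_mul _)).add
        (((pb ω).pow 2).const_mul _)).add (((pb ω).pow 3).const_mul _))
    · refine (S.abs_expect_step_le hs (sq_nonneg ‖interpErase x τ c i ω g‖) (by linarith : 0 < D) hτ
        (hx.moment_one _) (hx.moment_two _) (hx.moment_three _) (hx.moment_four _) (hx.moment_six _)
        rfl).trans (le_of_eq ?_)
      rw [← he_def]
      ring
  rw [mean_add (fun ω => ((((PolyGrowth.const _).add ((pb ω).const_mul _)).add
      ((pχ ω).const_mul _)).add (((pb ω).pow 2).const_mul _))) fun ω => ((pb ω).pow 3).const_mul _,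
    mean_add (fun ω => (((PolyGrowth.const _).add ((pb ω).const_mul _)).add
      ((pχ ω).const_mul _))) fun ω => ((pb ω).pow 2).const_mul _,
    mean_add (fun ω => (((PolyGrowth.const _).add ((pb ω).const_mul _)))) fun ω => (pχ ω).const_mul _,
    mean_add (fun ω => PolyGrowth.const _) fun ω => (pb ω).const_mul _,
    mean_const, mean_const_mul, mean_const_mul, mean_const_mul, mean_const_mul] at key
  have k1 := mul_le_mul_of_nonneg_left b1 (by positivity : 0 ≤ 16 * τ ^ 2 * s⁻¹ ^ 3)
  have k2 := mul_le_mul_of_nonneg_left b2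
    (by positivity : 0 ≤ s⁻¹ ^ 5 * τ ^ 3 * 896 * e + 1536 * s⁻¹ ^ 5 * τ ^ 4)
  have k3 := mul_le_mul_of_nonneg_left b3 (by positivity : 0 ≤ s⁻¹ ^ 5 * τ ^ 3 * 427 / e)
  have kχ := mul_le_mul_of_nonneg_left hχ (by positivity : 0 ≤ 20 * τ ^ 2)
  have k3e : s⁻¹ ^ 5 * τ ^ 3 * 427 / e * (35 / 9 * D ^ 3) = s⁻¹ ^ 5 * τ ^ 3 * 427 * (35 / 9 * e ^ 5) := by
    rw [← hee]; field_simp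
  set m := mean fun (ω : Fin n → P) g => S.χ₁ (‖interpErase x τ c i ω g‖ ^ 2 + τ ^ 2 * D)
      * ((‖interpErase x τ c i ω g‖ ^ 2 + τ ^ 2 * D) * ‖interpErase x τ c i ω g‖ ^ 2)
  rw [k3e] at k3
  have kk : _ ≤ stepBound s τ e + 20 * τ ^ 2 * m := key.trans (by
    unfold stepBound
    have hp : 0 ≤ s⁻¹ ^ 5 * τ ^ 3 * e ^ 5 := by positivity
    have e1 : 2 * τ ^ 2 * D * s⁻¹ ^ 2 = 2 * τ ^ 2 * e ^ 2 * s⁻¹ ^ 2 := by rw [hee]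
    have e2 : 16 * τ ^ 2 * s⁻¹ ^ 3 * D = 16 * τ ^ 2 * s⁻¹ ^ 3 * e ^ 2 := by rw [hee]
    have e3 : D ^ 2 = e ^ 4 := by rw [← hee]; ring
    rw [e3] at k2
    linarith)
  have := mul_le_mul_of_nonneg_left kk hc
  linarith

theorem stepBound_mono (hs : 0 < s) {t t' e : ℝ} (ht : 0 ≤ t) (htt : t ≤ t') (he : 0 ≤ e) :
    stepBound s t e ≤ stepBound s t' e := by
  have hq : 0 < s⁻¹ := inv_pos.2 hs
  unfold stepBound
  gcongr

/-- Comparison of a smooth function of `‖n^{-1/2} ∑ x(ω i)‖²` with its Gaussian counterpart. -/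
theorem IsDesign.abs_expect_sub_integral_le (hx : IsDesign x) (hs : 0 < s) {t : ℝ} (ht : 0 < t)
    (hn : n * t ^ 2 = 1) (hd : 3 ≤ finrank ℝ E) :
    |(𝔼 ω : Fin n → P, S.f (‖t • ∑ i, x (ω i)‖ ^ 2)) - ∫ g, S.f (‖g‖ ^ 2) ∂gauss E|
      ≤ stepBound s t √(finrank ℝ E) + 240 * t ^ 2 * s⁻¹ ^ 3 * √(finrank ℝ E) ^ 3 := by
  set e := √(finrank ℝ E : ℝ) with he_def
  have he : 0 ≤ e := Real.sqrt_nonneg _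
  have hq : 0 < s⁻¹ := inv_pos.2 hs
  set K := stepBound s t e with hK
  set C := 120 * t ^ 2 * s⁻¹ ^ 3 * e ^ 3 with hC
  have hC0 : 0 ≤ C := by positivity
  set ψ : ℝ → ℝ := fun θ =>
    mean fun (ω : Fin n → P) g => S.f (‖interp x (sin θ * t) (cos θ) ω g‖ ^ 2) with hψ
  set ψ' : ℝ → ℝ := fun θ => mean fun (ω : Fin n → P) g => S.f₁ (‖interp x (sin θ * t) (cos θ) ω g‖ ^ 2)
        * (2 * inner ℝ (interp x (sin θ * t) (cos θ) ω g) (interp x (cos θ * t) (-sin θ) ω g)) with hψ'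
  have hderiv : ∀ θ, HasDerivAt ψ (ψ' θ) θ := fun θ => hasDerivAt_mean_interp S x t θ
  have hbound : ∀ θ ∈ Set.Ioo 0 (π / 2), |ψ' θ| ≤ 2 * sin θ * cos θ * K + 2 * sin θ * C := by
    intro θ hθ
    have hσ : 0 < sin θ := sin_pos_of_pos_of_lt_pi hθ.1 (by linarith [hθ.2, pi_pos])
    have hc : 0 ≤ cos θ := cos_nonneg_of_mem_Icc ⟨by linarith [hθ.1, pi_pos], hθ.2.le⟩
    have hτ : 0 < sin θ * t := mul_pos hσ ht
    have hτt : sin θ * t ≤ t := mul_le_of_le_one_left ht.le (sin_le_one θ)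
    have h1 : n * (sin θ * t) ^ 2 + cos θ ^ 2 = 1 := by
      rw [← sin_sq_add_cos_sq θ, ← mul_one (sin θ ^ 2), ← hn]; ring
    have hτ2 : (sin θ * t) ^ 2 ≤ t ^ 2 := pow_le_pow_left₀ hτ.le hτt 2
    rw [hψ']
    simp only
    rw [hx.mean_deriv_eq S hn hτ.ne']
    refine (abs_sum_le_sum_abs _ _).trans ((sum_le_sum (g := fun _ =>
      2 * sin θ * t ^ 2 * (cos θ * K + C)) fun i _ => ?_).trans (le_of_eq ?_))
    · have := hx.abs_mean_step_le S hs hτ hc h1 hd i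
      rw [abs_mul, show |2 * cos θ * sin θ * t ^ 2| = 2 * sin θ * t ^ 2 * cos θ by
        rw [abs_of_nonneg (by positivity)]; ring, mul_assoc]
      refine mul_le_mul_of_nonneg_left (this.trans ?_) (by positivity)
      rw [hC, hK]
      gcongr
      exact stepBound_mono hs hτ.le hτt he
    · rw [sum_const, card_univ, Fintype.card_fin, nsmul_eq_mul]
      linear_combination (2 * sin θ * (cos θ * K + C)) * hn
  have hmono : ∀ ε : ℝ, |ε| ≤ 1 → MonotoneOn (fun θ => K * sin θ ^ 2 - 2 * C * cos θ + ε * ψ θ)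
      (Set.Icc 0 (π / 2)) := by
    intro ε hε
    have hd : ∀ θ, HasDerivAt (fun θ => K * sin θ ^ 2 - 2 * C * cos θ + ε * ψ θ)
        (2 * sin θ * cos θ * K + 2 * sin θ * C + ε * ψ' θ) θ := fun θ => by
      have := ((((hasDerivAt_sin θ).pow 2).const_mul K).sub ((hasDerivAt_cos θ).const_mul (2 * C))).add
        ((hderiv θ).const_mul ε)
      refine this.congr_deriv ?_
      push_cast
      ring
    refine monotoneOn_of_deriv_nonneg (convex_Icc _ _)
      (fun θ _ => (hd θ).continuousAt.continuousWithinAt)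
      (fun θ _ => (hd θ).differentiableAt.differentiableWithinAt) fun θ hθ => ?_
    rw [interior_Icc] at hθ
    rw [(hd θ).deriv]
    have h1 := hbound θ hθ
    have h2 : |ε * ψ' θ| ≤ |ψ' θ| := by
      rw [abs_mul]; exact mul_le_of_le_one_left (abs_nonneg _) hε
    linarith [neg_abs_le (ε * ψ' θ)]
  have h0 : ψ 0 = ∫ g, S.f (‖g‖ ^ 2) ∂gauss E := by
    simp [hψ, mean, interp, expect_const univ_nonempty]
  have h1 : ψ (π / 2) = 𝔼 ω : Fin n → P, S.f (‖t • ∑ i, x (ω i)‖ ^ 2) := by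
    simp [hψ, mean, interp]
  have hm := fun ε hε => hmono ε hε (Set.left_mem_Icc.2 (by positivity)) (Set.right_mem_Icc.2 (by positivity))
    (by positivity : (0 : ℝ) ≤ π / 2)
  have m1 := hm 1 (by norm_num)
  have m2 := hm (-1) (by norm_num)
  simp only [sin_zero, cos_zero, sin_pi_div_two, cos_pi_div_two] at m1 m2
  rw [← h0, ← h1, abs_le]
  constructor <;> linarith

end SmoothBound

section ChiSquare

open Module ProbabilityTheory

variable {E : Type*} [NormedAddCommGroup E] [InnerProductSpace ℝ E] [FiniteDimensional ℝ E]
  [MeasurableSpace E] [BorelSpace E]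

theorem integral_gammaMeasure (p r : ℝ) (hp : 0 < p) (hr : 0 < r) (f : ℝ → ℝ) :
    ∫ y, f y ∂gammaMeasure p r
      = r ^ p / Gamma p * ∫ y in Set.Ioi 0, y ^ (p - 1) * (rexp (-(r * y)) * f y) := by
  unfold gammaMeasure gammaPDF
  rw [integral_withDensity_eq_integral_toReal_smul (measurable_gammaPDFReal p r).ennreal_ofReal
    (ae_of_all _ fun x => ENNReal.ofReal_lt_top), ← integral_const_mul, ← integral_Ici_eq_integral_Ioi,
    ← integral_indicator measurableSet_Ici]
  refine integral_congr_ae (ae_of_all _ fun y => ?_)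
  simp only [ENNReal.toReal_ofReal (gammaPDFReal_nonneg hp hr y)]
  simp only [gammaPDFReal, Set.indicator, Set.mem_Ici, smul_eq_mul]
  split_ifs <;> ring

theorem exists_integral_gauss_norm_sq (hd : 0 < finrank ℝ E) : ∃ K : ℝ, ∀ f : ℝ → ℝ,
    ∫ x, f (‖x‖ ^ 2) ∂gauss E
      = K * ∫ y in Set.Ioi 0, y ^ ((finrank ℝ E : ℝ) / 2 - 1) * (rexp (-(1 / 2 * y)) * f y) := by
  have : Nontrivial E := finrank_pos_iff.1 hd
  refine ⟨finrank ℝ E * (volume : Measure E).real (Metric.ball 0 1)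
    * (2 * π) ^ (-((finrank ℝ E : ℝ) / 2)) / 2, fun f => ?_⟩
  rw [integral_gauss]
  have h1 := integral_fun_norm_addHaar (volume : Measure E)
    fun ρ => (2 * π) ^ (-((finrank ℝ E : ℝ) / 2)) * rexp (-(1 / 2) * ρ ^ 2) * f (ρ ^ 2)
  have h2 := integral_comp_rpow_Ioi_of_pos
    (g := fun y => y ^ ((finrank ℝ E : ℝ) / 2 - 1) * (rexp (-(1 / 2 * y)) * f y)) two_pos
  rw [← h2]
  unfold gaussDensity
  refine h1.trans ?_
  rw [nsmul_eq_mul, smul_eq_mul, mul_assoc, mul_div_assoc, mul_assoc]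
  rw [mul_div_assoc, mul_assoc]
  congr 2
  rw [← integral_const_mul]
  refine setIntegral_congr_fun measurableSet_Ioi fun y (hy : 0 < y) => ?_
  have e1 : (y ^ (2 : ℝ)) ^ ((finrank ℝ E : ℝ) / 2 - 1) * y = y ^ (finrank ℝ E - 1) := by
    rw [← rpow_mul hy.le]
    nth_rewrite 2 [← rpow_one y]
    rw [← rpow_add hy, ← rpow_natCast, Nat.cast_sub hd]
    congr 1
    push_cast
    ring
  have e2 : y ^ (2 : ℝ) = y ^ 2 := rpow_two y
  simp only [smul_eq_mul]
  rw [← e1, e2, show (2 : ℝ) - 1 = 1 by norm_num, rpow_one, neg_mul]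
  ring

/-- The squared norm of a standard Gaussian vector is chi-square distributed. -/
theorem integral_gauss_norm_sq_eq_chiSq (hd : 0 < finrank ℝ E) (f : ℝ → ℝ) :
    ∫ x, f (‖x‖ ^ 2) ∂gauss E = ∫ y, f y ∂chiSq (finrank ℝ E) := by
  obtain ⟨K, hK⟩ := exists_integral_gauss_norm_sq (E := E) hd
  have hp : (0 : ℝ) < (finrank ℝ E : ℝ) / 2 := by positivity
  have hr : (0 : ℝ) < 1 / 2 := by norm_num
  have : IsProbabilityMeasure (gammaMeasure ((finrank ℝ E : ℝ) / 2) (1 / 2)) :=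
    isProbabilityMeasure_gammaMeasure hp hr
  have h1 := hK fun _ => 1
  have h2 := integral_gammaMeasure _ _ hp hr fun _ => 1
  rw [integral_const, probReal_univ, one_smul] at h1 h2
  rw [chiSq, hK, integral_gammaMeasure _ _ hp hr]
  congr 1
  exact mul_right_cancel₀ (right_ne_zero_of_mul (h1 ▸ one_ne_zero)) (h1.symm.trans h2)

theorem log_le_half_sub_inv {u : ℝ} (hu : 1 ≤ u) : log u ≤ (u - u⁻¹) / 2 := by
  rw [← Real.sinh_log (by linarith)]
  exact Real.self_le_sinh_iff.2 (log_nonneg hu)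

theorem gamma_step {a : ℝ} (ha : 0 < a)
    (h : 3 / 2 * √(a + 1) * (a ^ a * rexp (-a)) ≤ Gamma (a + 1)) :
    3 / 2 * √(a + 1 + 1) * ((a + 1) ^ (a + 1) * rexp (-(a + 1))) ≤ Gamma (a + 1 + 1) := by
  rw [Real.Gamma_add_one (by positivity : a + 1 ≠ 0)]
  refine le_trans ?_ (mul_le_mul_of_nonneg_left h (by positivity))
  have e1 : ∀ x : ℝ, 0 < x → √x = rexp (log x / 2) := fun x hx => by
    rw [← log_sqrt hx.le, exp_log (sqrt_pos.2 hx)]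
  have e2 : (a + 1) = rexp (log (a + 1)) := (exp_log (by linarith)).symm
  have hl1 : a * (log (a + 1) - log a) ≤ (2 * a + 1) / (2 * a + 2) := by
    rw [← log_div (by positivity) ha.ne']
    have := log_le_half_sub_inv (u := (a + 1) / a) (by rw [le_div_iff₀ ha]; linarith)
    refine (mul_le_mul_of_nonneg_left this ha.le).trans (le_of_eq ?_)
    field_simp
    ring
  have hl2 : log (a + 1 + 1) - log (a + 1) ≤ 1 / (a + 1) := by
    rw [← log_div (by positivity) (by positivity)]
    refine (log_le_sub_one_of_pos (by positivity)).trans (le_of_eq ?_)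
    field_simp
    ring
  have hl3 : (2 * a + 1) / (2 * a + 2) + 1 / (a + 1) / 2 = 1 := by
    field_simp
    ring
  have key : √(a + 1 + 1) * ((a + 1) ^ (a + 1) * rexp (-(a + 1)))
      ≤ (a + 1) * (√(a + 1) * (a ^ a * rexp (-a))) := by
    rw [e1 _ (by positivity), e1 (a + 1) (by positivity), rpow_def_of_pos ha,
      rpow_def_of_pos (by positivity : 0 < a + 1)]
    calc _ = rexp (log (a + 1 + 1) / 2 + (log (a + 1) * (a + 1) + -(a + 1))) := by
          rw [← exp_add, ← exp_add]
      _ ≤ rexp (log (a + 1) + (log (a + 1) / 2 + (log a * a + -a))) := ?_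
      _ = _ := by rw [exp_add, exp_log (by positivity), exp_add, exp_add]
    refine exp_le_exp.2 ?_
    nlinarith
  linarith

theorem gamma_lower {d : ℕ} (hd : 3 ≤ d) :
    3 / 2 * √((d : ℝ) / 2 - 1 + 1) * (((d : ℝ) / 2 - 1) ^ ((d : ℝ) / 2 - 1) * rexp (-((d : ℝ) / 2 - 1)))
      ≤ Gamma ((d : ℝ) / 2 - 1 + 1) := by
  induction d using Nat.strong_induction_on with
  | _ d ih =>
    rcases Nat.lt_or_ge d 5 with h | h
    · have he := Real.exp_one_gt_d9
      interval_cases d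
      · have e1 : ((3 : ℕ) : ℝ) / 2 - 1 = 1 / 2 := by norm_num
        rw [e1, Real.Gamma_add_one (by norm_num), Real.Gamma_one_half_eq, ← sqrt_eq_rpow]
        have h1 : 3 / 2 * √(1 / 2 + 1) * (√(1 / 2) * rexp (-(1 / 2))) ≤ 4 / 5 := by
          refine abs_le_of_sq_le_sq' ?_ (by norm_num) |>.2
          have : rexp (-(1 / 2)) ^ 2 = (rexp 1)⁻¹ := by
            rw [← exp_nat_mul, ← exp_neg]; norm_num
          rw [mul_pow, mul_pow, mul_pow, this, sq_sqrt (by norm_num), sq_sqrt (by norm_num),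
            ← div_eq_mul_inv, ← mul_div_assoc, div_le_iff₀ (by positivity)]
          norm_num
          linarith
        have h2 : 8 / 5 ≤ √π := le_sqrt_of_sq_le (by linarith [pi_gt_three])
        linarith
      · have e1 : ((4 : ℕ) : ℝ) / 2 - 1 = 1 := by norm_num
        rw [e1, Real.Gamma_add_one (by norm_num), Real.Gamma_one, one_rpow, exp_neg, one_mul,
          ← div_eq_mul_inv, div_le_iff₀ (by positivity)]
        have : √(1 + 1) ≤ 3 / 2 := sqrt_le_iff.2 (by norm_num)
        linarith
    · obtain ⟨k, rfl⟩ : ∃ k, d = k + 2 := ⟨d - 2, by omega⟩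
      have := ih k (by omega) (by omega)
      have hk : (3 : ℝ) ≤ k := by exact_mod_cast (by omega : 3 ≤ k)
      have e : ((k + 2 : ℕ) : ℝ) / 2 - 1 = (k : ℝ) / 2 - 1 + 1 := by push_cast; ring
      rw [e]
      exact gamma_step (by linarith) this

theorem rpow_mul_exp_le {a x : ℝ} (ha : 0 < a) (hx : 0 ≤ x) :
    x ^ a * rexp (-(1 / 2 * x)) ≤ (2 * a) ^ a * rexp (-a) := by
  rcases hx.eq_or_lt with rfl | hx
  · rw [zero_rpow ha.ne', zero_mul]; positivity
  rw [rpow_def_of_pos hx, rpow_def_of_pos (by positivity), ← exp_add, ← exp_add]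
  refine exp_le_exp.2 ?_
  have := log_le_sub_one_of_pos (div_pos hx (by positivity : 0 < 2 * a))
  rw [log_div hx.ne' (by positivity)] at this
  have h2 := mul_le_mul_of_nonneg_right this ha.le
  have h3 : (x / (2 * a) - 1) * a = x / 2 - a := by field_simp
  linarith

/-- A bound of optimal order for the chi-square density. -/
theorem gammaPDFReal_half_le {d : ℕ} (hd : 3 ≤ d) (x : ℝ) :
    gammaPDFReal ((d : ℝ) / 2) (1 / 2) x ≤ √2 / 3 / √d := by
  have hd' : (3 : ℝ) ≤ d := by exact_mod_cast hd
  unfold gammaPDFReal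
  split_ifs with hx
  · set a : ℝ := (d : ℝ) / 2 - 1 with ha_def
    have ha : 0 < a := by linarith
    have e : (d : ℝ) / 2 = a + 1 := by linarith
    have hg := gamma_lower hd
    rw [← ha_def] at hg
    have hG : 0 < Gamma (a + 1) := Gamma_pos_of_pos (by linarith)
    have hs : √(a + 1) * √2 = √d := by
      rw [← sqrt_mul (by linarith)]; congr 1; linarith
    have h2 := rpow_mul_exp_le ha hx
    have h3 : (1 / 2 : ℝ) ^ (a + 1) * (2 * a) ^ a = a ^ a / 2 := by
      rw [rpow_add (by norm_num), rpow_one, mul_right_comm, ← mul_rpow (by norm_num) (by positivity)]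
      rw [show (1 / 2 : ℝ) * (2 * a) = a by ring]; ring
    rw [e, mul_assoc, div_mul_eq_mul_div, div_le_iff₀ hG, ← hs,
      div_div]
    calc _ ≤ (1 / 2 : ℝ) ^ (a + 1) * ((2 * a) ^ a * rexp (-a)) :=
          mul_le_mul_of_nonneg_left h2 (by positivity)
      _ = a ^ a * rexp (-a) / 2 := by rw [← mul_assoc, h3]; ring
      _ ≤ (1 / (3 * √(a + 1))) * Gamma (a + 1) := by
          rw [div_mul_eq_mul_div, le_div_iff₀ (by positivity)]; linarith
      _ = _ := by
          have : √2 ≠ 0 := by positivity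
          field_simp
  · positivity

end ChiSquare

section Smoothing

open ProbabilityTheory

variable {a s : ℝ} (S : SmoothStep a s)

theorem SmoothStep.integrable_f (ν : Measure ℝ) [IsProbabilityMeasure ν] : Integrable S.f ν :=
  .of_bound S.continuous_f.aestronglyMeasurable 1 (ae_of_all _ fun x => by
    rw [Real.norm_eq_abs, abs_of_nonneg (S.f_mem x).1]; exact (S.f_mem x).2)

theorem SmoothStep.le_integral_one_sub (ν : Measure ℝ) [IsProbabilityMeasure ν] :
    ν.real (Set.Iic a) ≤ 1 - ∫ x, S.f x ∂ν := by
  have h : ∫ x, (Set.Iic a).indicator 1 x ∂ν ≤ ∫ x, (1 - S.f x) ∂ν := by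
    refine integral_mono ((integrable_const (1 : ℝ)).indicator measurableSet_Iic)
      ((integrable_const 1).sub (S.integrable_f ν)) fun x => ?_
    by_cases hx : x ≤ a
    · simp [Set.indicator_of_mem (show x ∈ Set.Iic a from hx), S.f_eq_zero x hx]
    · simpa [Set.indicator_of_notMem (show x ∉ Set.Iic a from hx)] using (S.f_mem x).2
  rwa [integral_indicator_one measurableSet_Iic, integral_sub (integrable_const 1) (S.integrable_f ν),
    integral_const, probReal_univ, one_smul] at h

theorem SmoothStep.integral_one_sub_le (ν : Measure ℝ) [IsProbabilityMeasure ν] :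
    1 - ∫ x, S.f x ∂ν ≤ ν.real (Set.Iic (a + 5 * s)) := by
  have h : ∫ x, (1 - S.f x) ∂ν ≤ ∫ x, (Set.Iic (a + 5 * s)).indicator 1 x ∂ν := by
    refine integral_mono ((integrable_const 1).sub (S.integrable_f ν))
      ((integrable_const (1 : ℝ)).indicator measurableSet_Iic) fun x => ?_
    by_cases hx : x ≤ a + 5 * s
    · simpa [Set.indicator_of_mem (show x ∈ Set.Iic (a + 5 * s) from hx)] using (S.f_mem x).1
    · simp [Set.indicator_of_notMem (show x ∉ Set.Iic (a + 5 * s) from hx),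
        S.f_eq_one x (not_le.1 hx).le]
  rwa [integral_indicator_one measurableSet_Iic, integral_sub (integrable_const 1) (S.integrable_f ν),
    integral_const, probReal_univ, one_smul] at h

/-- Kolmogorov distance from smooth test functions and a concentration bound. -/
theorem abs_cdf_sub_le (hs : 0 < s) {μ ν : Measure ℝ} [IsProbabilityMeasure μ] [IsProbabilityMeasure ν]
    {K M : ℝ} (hK : ∀ a, ∀ S : SmoothStep a s, |∫ x, S.f x ∂μ - ∫ x, S.f x ∂ν| ≤ K)
    (hM : ∀ a b, a ≤ b → ν.real (Set.Iic b) - ν.real (Set.Iic a) ≤ M * (b - a)) (z : ℝ) :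
    |μ.real (Set.Iic z) - ν.real (Set.Iic z)| ≤ 5 * s * M + K := by
  rw [abs_le]
  constructor
  · have h1 := (smoothStep (z - 5 * s) s hs).integral_one_sub_le μ
    have h2 := (smoothStep (z - 5 * s) s hs).le_integral_one_sub ν
    have h3 := (abs_le.1 (hK _ (smoothStep (z - 5 * s) s hs))).2
    have h4 := hM (z - 5 * s) z (by linarith)
    rw [sub_add_cancel] at h1
    linarith
  · have h1 := (smoothStep z s hs).le_integral_one_sub μ
    have h2 := (smoothStep z s hs).integral_one_sub_le ν
    have h3 := (abs_le.1 (hK _ (smoothStep z s hs))).1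
    have h4 := hM z (z + 5 * s) (by linarith)
    linarith

theorem chiSq_cdf_sub_le {d : ℕ} (hd : 3 ≤ d) (a b : ℝ) (hab : a ≤ b) :
    (chiSq d).real (Set.Iic b) - (chiSq d).real (Set.Iic a) ≤ √2 / 3 / √d * (b - a) := by
  have hd' : (0 : ℝ) < d := by exact_mod_cast (by omega : 0 < d)
  have : IsProbabilityMeasure (chiSq d) :=
    isProbabilityMeasure_gammaMeasure (by positivity) (by norm_num)
  rw [← measureReal_sdiff (Set.Iic_subset_Iic.2 hab) measurableSet_Iic, Set.Iic_sdiff_Iic,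
    measureReal_def]
  refine ENNReal.toReal_le_of_le_ofReal (mul_nonneg (by positivity) (sub_nonneg.2 hab)) ?_
  rw [chiSq, gammaMeasure, withDensity_apply _ measurableSet_Ioc]
  calc _ ≤ ∫⁻ _ in Set.Ioc a b, ENNReal.ofReal (√2 / 3 / √d) :=
        lintegral_mono fun x => ENNReal.ofReal_le_ofReal (gammaPDFReal_half_le hd x)
    _ = _ := by
        rw [setLIntegral_const, Real.volume_Ioc, ← ENNReal.ofReal_mul (by positivity)]

end Smoothing

section PermutationMoments

open Equiv

variable {ι : Type*} {a ρ : ι → ℝ}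

/-- The change of `permStat` when two arguments of the permutation are swapped. -/
def permDiff (a ρ : ι → ℝ) (i j : ι) (σ : Perm ι) : ℝ := -((a i - a j) * (ρ (σ i) - ρ (σ j)))

theorem permDiff_mul_swap [DecidableEq ι] (i j : ι) (σ : Perm ι) :
    permDiff a ρ i j (σ * swap i j) = -permDiff a ρ i j σ := by
  unfold permDiff
  rw [Perm.mul_apply, Perm.mul_apply, swap_apply_left, swap_apply_right]
  ring

variable [Fintype ι]

/-- The linear permutation statistic with coefficients `a` and scores `ρ`. -/
def permStat (a ρ : ι → ℝ) (σ : Perm ι) : ℝ := ∑ j, a j * ρ (σ j)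

theorem sum_permDiff (ha : ∑ i, a i = 0) (σ : Perm ι) :
    ∑ i, ∑ j, permDiff a ρ i j σ = -(2 * Fintype.card ι * permStat a ρ σ) := by
  have : ∀ i j, permDiff a ρ i j σ
      = -(a i * ρ (σ i)) + a i * ρ (σ j) + a j * ρ (σ i) - a j * ρ (σ j) := fun i j => by
    unfold permDiff; ring
  simp only [this, sum_sub_distrib, sum_add_distrib, sum_const, card_univ, nsmul_eq_mul,
    ← mul_sum, ← sum_mul, ha, sum_neg_distrib]
  unfold permStat
  ring

theorem sum_sub_sq (ha : ∑ i, a i = 0) :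
    ∑ i, ∑ j, (a i - a j) ^ 2 = 2 * Fintype.card ι * ∑ i, a i ^ 2 := by
  have : ∀ i j, (a i - a j) ^ 2 = a i ^ 2 + a j ^ 2 - 2 * a i * a j := fun i j => by ring
  simp only [this, sum_sub_distrib, sum_add_distrib, sum_const, card_univ, nsmul_eq_mul,
    ← mul_sum, ha, mul_zero]
  ring

variable [DecidableEq ι]

theorem permStat_mul_swap (i j : ι) (σ : Perm ι) :
    permStat a ρ (σ * swap i j) = permStat a ρ σ + permDiff a ρ i j σ := by
  rcases eq_or_ne i j with rfl | hij
  · simp [permDiff, Perm.one_def.symm]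
  unfold permStat permDiff
  rw [← add_sum_erase _ _ (mem_univ i), ← add_sum_erase _ _ (mem_univ i),
    ← add_sum_erase _ _ (mem_erase.2 ⟨hij.symm, mem_univ j⟩),
    ← add_sum_erase _ _ (mem_erase.2 ⟨hij.symm, mem_univ j⟩)]
  have : ∑ k ∈ (univ.erase i).erase j, a k * ρ ((σ * swap i j) k)
      = ∑ k ∈ (univ.erase i).erase j, a k * ρ (σ k) := sum_congr rfl fun k hk => by
    rw [Perm.mul_apply, swap_apply_of_ne_of_ne (ne_of_mem_erase (mem_of_mem_erase hk))
      (ne_of_mem_erase hk)]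
  rw [this, Perm.mul_apply, Perm.mul_apply, swap_apply_left, swap_apply_right]
  ring

theorem expect_perm_mul_right (u : Perm ι → ℝ) (τ : Perm ι) : 𝔼 σ, u (σ * τ) = 𝔼 σ, u σ :=
  Fintype.expect_equiv (Equiv.mulRight τ) _ _ fun _ => rfl

theorem expect_permDiff_mul (φ : ℝ → ℝ) (i j : ι) :
    𝔼 σ, permDiff a ρ i j σ * φ (permStat a ρ σ)
      = -(1 / 2 * 𝔼 σ, permDiff a ρ i j σ
        * (φ (permStat a ρ σ + permDiff a ρ i j σ) - φ (permStat a ρ σ))) := by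
  have h := expect_perm_mul_right (fun σ => permDiff a ρ i j σ * φ (permStat a ρ σ)) (swap i j)
  simp only [permStat_mul_swap, permDiff_mul_swap, neg_mul, expect_neg_distrib] at h
  simp only [mul_sub, expect_sub_distrib]
  linarith

/-- Exchangeable pair identity for linear permutation statistics. -/
theorem expect_permStat_mul (ha : ∑ i, a i = 0) (φ : ℝ → ℝ) :
    4 * Fintype.card ι * 𝔼 σ, permStat a ρ σ * φ (permStat a ρ σ)
      = 𝔼 σ, ∑ i, ∑ j, permDiff a ρ i j σ
        * (φ (permStat a ρ σ + permDiff a ρ i j σ) - φ (permStat a ρ σ)) := by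
  have h1 : 𝔼 σ, (∑ i, ∑ j, permDiff a ρ i j σ) * φ (permStat a ρ σ)
      = -(2 * Fintype.card ι * 𝔼 σ, permStat a ρ σ * φ (permStat a ρ σ)) := by
    simp only [sum_permDiff ha, neg_mul, expect_neg_distrib, mul_expect, mul_assoc]
  have h2 : 𝔼 σ, (∑ i, ∑ j, permDiff a ρ i j σ) * φ (permStat a ρ σ)
      = -(1 / 2 * 𝔼 σ, ∑ i, ∑ j, permDiff a ρ i j σ
        * (φ (permStat a ρ σ + permDiff a ρ i j σ) - φ (permStat a ρ σ))) := by
    simp only [sum_mul, expect_sum_comm, expect_permDiff_mul, mul_sum, sum_neg_distrib]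
  linarith

theorem expect_perm_apply (u : ι → ℝ) (i : ι) :
    Fintype.card ι * 𝔼 σ : Perm ι, u (σ i) = ∑ k, u k := by
  have h : ∀ j, 𝔼 σ : Perm ι, u (σ j) = 𝔼 σ : Perm ι, u (σ i) := fun j => by
    rw [← expect_perm_mul_right (fun σ => u (σ j)) (swap i j)]
    simp
  calc _ = ∑ j, 𝔼 σ : Perm ι, u (σ j) := by simp [h]
    _ = 𝔼 σ : Perm ι, ∑ j, u (σ j) := (expect_sum_comm _ _ _).symm
    _ = 𝔼 σ : Perm ι, ∑ j, u j := expect_congr rfl fun σ _ => Equiv.sum_comp σ u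
    _ = _ := expect_const univ_nonempty _

theorem expect_permStat_sq (ha : ∑ i, a i = 0) (hρ : ∑ i, ρ i = 0) :
    ((Fintype.card ι : ℝ) - 1) * 𝔼 σ, permStat a ρ σ ^ 2 = (∑ i, a i ^ 2) * ∑ i, ρ i ^ 2 := by
  rcases isEmpty_or_nonempty ι with hι | hι
  · simp [permStat]
  have h := expect_permStat_mul (ρ := ρ) ha fun x => x
  have e : ∀ σ : Perm ι, ∑ i, ∑ j, permDiff a ρ i j σ * (permStat a ρ σ + permDiff a ρ i j σ - permStat a ρ σ)
      = 2 * Fintype.card ι * ∑ i, a i ^ 2 * ρ (σ i) ^ 2 + 2 * (∑ i, a i ^ 2) * (∑ i, ρ i ^ 2)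
        + 4 * permStat a ρ σ ^ 2 := fun σ => by
    have h1 : ∑ i, ρ (σ i) = 0 := (Equiv.sum_comp σ ρ).trans hρ
    have h2 : ∑ i, ρ (σ i) ^ 2 = ∑ i, ρ i ^ 2 := Equiv.sum_comp σ fun i => ρ i ^ 2
    have h3 : ∀ i j, permDiff a ρ i j σ * (permStat a ρ σ + permDiff a ρ i j σ - permStat a ρ σ)
        = a i ^ 2 * ρ (σ i) ^ 2 + a j ^ 2 * ρ (σ j) ^ 2 + a i ^ 2 * ρ (σ j) ^ 2
          + ρ (σ i) ^ 2 * a j ^ 2 - 2 * a i * ρ (σ i) ^ 2 * a j - 2 * a i * (a j * ρ (σ j) ^ 2)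
          - 2 * a i ^ 2 * ρ (σ i) * ρ (σ j) - 2 * ρ (σ i) * (a j ^ 2 * ρ (σ j))
          + 4 * (a i * ρ (σ i)) * (a j * ρ (σ j)) := fun i j => by
      unfold permDiff; ring
    simp only [h3, sum_sub_distrib, sum_add_distrib, sum_const, card_univ, nsmul_eq_mul,
      ← mul_sum, ← sum_mul, ha, h1, h2]
    unfold permStat
    ring
  have e2 : Fintype.card ι * 𝔼 σ : Perm ι, ∑ i, a i ^ 2 * ρ (σ i) ^ 2
      = (∑ i, a i ^ 2) * ∑ i, ρ i ^ 2 := by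
    rw [expect_sum_comm, mul_sum, sum_mul]
    refine sum_congr rfl fun i _ => ?_
    rw [← mul_expect, mul_left_comm, expect_perm_apply (fun k => ρ k ^ 2)]
  simp only [e, expect_add_distrib, ← mul_expect, expect_const univ_nonempty, ← pow_two] at h
  linarith

theorem expect_permStat_mul_le [Nonempty ι] (ha : ∑ i, a i = 0) {φ ψ : ℝ → ℝ} {c R : ℝ} (hc : 0 ≤ c)
    (hψ : ∀ x, 0 ≤ ψ x)
    (h : ∀ x y, (y - x) * (φ y - φ x) ≤ c * ((y - x) ^ 2 * (ψ x + ψ y)))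
    (hR : ∀ i j, (ρ i - ρ j) ^ 2 ≤ R) :
    𝔼 σ, permStat a ρ σ * φ (permStat a ρ σ)
      ≤ c * R * (∑ i, a i ^ 2) * 𝔼 σ, ψ (permStat a ρ σ) := by
  have hswap : ∀ i j, 𝔼 σ, permDiff a ρ i j σ ^ 2 * ψ (permStat a ρ σ + permDiff a ρ i j σ)
      = 𝔼 σ, permDiff a ρ i j σ ^ 2 * ψ (permStat a ρ σ) := fun i j => by
    have := expect_perm_mul_right (fun σ => permDiff a ρ i j σ ^ 2 * ψ (permStat a ρ σ)) (swap i j)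
    simpa only [permStat_mul_swap, permDiff_mul_swap, neg_sq] using this
  have hpair : ∀ i j, 𝔼 σ, permDiff a ρ i j σ
        * (φ (permStat a ρ σ + permDiff a ρ i j σ) - φ (permStat a ρ σ))
      ≤ 2 * c * R * (a i - a j) ^ 2 * 𝔼 σ, ψ (permStat a ρ σ) := fun i j =>
    calc _ ≤ 𝔼 σ, c * (permDiff a ρ i j σ ^ 2 * ψ (permStat a ρ σ)
          + permDiff a ρ i j σ ^ 2 * ψ (permStat a ρ σ + permDiff a ρ i j σ)) :=
          expect_le_expect fun σ _ => by
            have := h (permStat a ρ σ) (permStat a ρ σ + permDiff a ρ i j σ)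
            rwa [add_sub_cancel_left, mul_add] at this
      _ = 2 * c * 𝔼 σ, permDiff a ρ i j σ ^ 2 * ψ (permStat a ρ σ) := by
          rw [← mul_expect, expect_add_distrib, hswap]; ring
      _ ≤ 2 * c * 𝔼 σ, R * (a i - a j) ^ 2 * ψ (permStat a ρ σ) :=
          mul_le_mul_of_nonneg_left (expect_le_expect fun σ _ =>
            mul_le_mul_of_nonneg_right (by
              unfold permDiff
              rw [neg_sq, mul_pow, mul_comm]
              exact mul_le_mul_of_nonneg_right (hR _ _) (sq_nonneg _)) (hψ _)) (by positivity)
      _ = _ := by rw [← mul_expect]; ring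
  have hsum := expect_permStat_mul (ρ := ρ) ha φ
  simp only [expect_sum_comm] at hsum
  have hle : 4 * Fintype.card ι * 𝔼 σ, permStat a ρ σ * φ (permStat a ρ σ)
      ≤ 4 * Fintype.card ι * (c * R * (∑ i, a i ^ 2) * 𝔼 σ, ψ (permStat a ρ σ)) := by
    rw [hsum]
    refine (sum_le_sum fun i _ => sum_le_sum fun j _ => hpair i j).trans (le_of_eq ?_)
    simp only [← sum_mul, ← mul_sum, sum_sub_sq ha]
    ring
  exact le_of_mul_le_mul_left hle (by positivity)

theorem expect_permStat_four_le [Nonempty ι] (ha : ∑ i, a i = 0) {R : ℝ}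
    (hR : ∀ i j, (ρ i - ρ j) ^ 2 ≤ R) :
    𝔼 σ, permStat a ρ σ ^ 4 ≤ 3 / 2 * R * (∑ i, a i ^ 2) * 𝔼 σ, permStat a ρ σ ^ 2 := by
  have := expect_permStat_mul_le (ρ := ρ) ha (φ := fun x => x ^ 3) (ψ := fun x => x ^ 2)
    (c := 3 / 2) (by norm_num) (fun x => sq_nonneg x) (fun x y => by
      nlinarith [mul_nonneg (sq_nonneg (y - x)) (sq_nonneg (y - x))]) hR
  simpa only [← pow_succ'] using this

theorem expect_permStat_six_le [Nonempty ι] (ha : ∑ i, a i = 0) {R : ℝ}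
    (hR : ∀ i j, (ρ i - ρ j) ^ 2 ≤ R) :
    𝔼 σ, permStat a ρ σ ^ 6 ≤ 5 / 2 * R * (∑ i, a i ^ 2) * 𝔼 σ, permStat a ρ σ ^ 4 := by
  have := expect_permStat_mul_le (ρ := ρ) ha (φ := fun x => x ^ 5) (ψ := fun x => x ^ 4)
    (c := 5 / 2) (by norm_num) (fun x => by positivity) (fun x y => by
      have h : 0 ≤ (y - x) ^ 2 * ((x - y) ^ 2 * (3 * x ^ 2 + 4 * x * y + 3 * y ^ 2)) :=
        mul_nonneg (sq_nonneg _) (mul_nonneg (sq_nonneg _) (by nlinarith [sq_nonneg (x + y), sq_nonneg x, sq_nonneg y]))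
      linarith) hR
  simpa only [← pow_succ'] using this

theorem expect_permStat_odd {e : Perm ι} (he : ∀ i, ρ (e i) = -ρ i) {k : ℕ} (hk : Odd k) :
    𝔼 σ, permStat a ρ σ ^ k = 0 := by
  have h : 𝔼 σ, permStat a ρ (e * σ) ^ k = 𝔼 σ, permStat a ρ σ ^ k :=
    Fintype.expect_equiv (Equiv.mulLeft e) _ _ fun _ => rfl
  have h2 : ∀ σ, permStat a ρ (e * σ) = -permStat a ρ σ := fun σ => by
    simp [permStat, he]
  simp only [h2, hk.neg_pow, expect_neg_distrib] at h
  linarith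

end PermutationMoments

section Ranks

open Module Equiv

/-- The centered rank of the `k`-th of `r` treatments. -/
noncomputable def rankScore (r : ℕ) (k : Fin r) : ℝ := (k : ℕ) + 1 - ((r : ℝ) + 1) / 2

theorem sum_range_rankScore (r : ℕ) (c : ℝ) :
    ∑ k ∈ range r, ((k : ℝ) + 1 - c) = r * (r + 1) / 2 - r * c := by
  induction r with
  | zero => simp
  | succ r ih => rw [sum_range_succ, ih]; push_cast; ring

theorem sum_range_rankScore_sq (r : ℕ) (c : ℝ) : ∑ k ∈ range r, ((k : ℝ) + 1 - c) ^ 2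
    = r * (r + 1) * (2 * r + 1) / 6 - c * (r * (r + 1)) + r * c ^ 2 := by
  induction r with
  | zero => simp
  | succ r ih => rw [sum_range_succ, ih]; push_cast; ring

variable {r : ℕ}

theorem sum_rankScore : ∑ k, rankScore r k = 0 := by
  unfold rankScore
  rw [Fin.sum_univ_eq_sum_range fun k => (k : ℝ) + 1 - ((r : ℝ) + 1) / 2, sum_range_rankScore]
  ring

theorem sum_rankScore_sq : ∑ k, rankScore r k ^ 2 = r * ((r : ℝ) ^ 2 - 1) / 12 := by
  unfold rankScore
  rw [Fin.sum_univ_eq_sum_range fun k => ((k : ℝ) + 1 - ((r : ℝ) + 1) / 2) ^ 2,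
    sum_range_rankScore_sq]
  ring

theorem rankScore_rev (k : Fin r) : rankScore r (Fin.revPerm k) = -rankScore r k := by
  have := k.isLt
  simp only [rankScore, Fin.revPerm_apply, Fin.val_rev]
  rw [Nat.cast_sub (by omega)]
  push_cast
  ring

theorem sq_rankScore_sub_le (i j : Fin r) :
    (rankScore r i - rankScore r j) ^ 2 ≤ ((r : ℝ) - 1) ^ 2 := by
  have hi : ((i : ℕ) : ℝ) + 1 ≤ r := by exact_mod_cast i.isLt
  have hj : ((j : ℕ) : ℝ) + 1 ≤ r := by exact_mod_cast j.isLt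
  have hi0 : (0 : ℝ) ≤ (i : ℕ) := Nat.cast_nonneg _
  have hj0 : (0 : ℝ) ≤ (j : ℕ) := Nat.cast_nonneg _
  unfold rankScore
  exact sq_le_sq' (by linarith) (by linarith)

/-- The vectors with coordinate sum zero. -/
noncomputable def sumZero (r : ℕ) : Submodule ℝ (EuclideanSpace ℝ (Fin r)) :=
  (ℝ ∙ (WithLp.toLp 2 1 : EuclideanSpace ℝ (Fin r)))ᗮ

theorem mem_sumZero {v : EuclideanSpace ℝ (Fin r)} : v ∈ sumZero r ↔ ∑ i, v i = 0 := by
  rw [sumZero, Submodule.mem_orthogonal_singleton_iff_inner_right, PiLp.inner_apply]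
  simp

theorem finrank_sumZero (hr : 1 ≤ r) : finrank ℝ (sumZero r) = r - 1 := by
  have : Fact (finrank ℝ (EuclideanSpace ℝ (Fin r)) = (r - 1) + 1) :=
    ⟨by rw [finrank_euclideanSpace_fin]; omega⟩
  refine Submodule.finrank_orthogonal_span_singleton fun h => ?_
  have := congrFun (congrArg WithLp.ofLp h) ⟨0, hr⟩
  simp at this

/-- The factor normalizing the centered ranks. -/
noncomputable def rankScale (r : ℕ) : ℝ := √12 / √((r : ℝ) * ((r : ℝ) + 1))

theorem rankScale_sq : rankScale r ^ 2 = 12 / ((r : ℝ) * (r + 1)) := by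
  rw [rankScale, div_pow, Real.sq_sqrt (by norm_num), Real.sq_sqrt (by positivity)]

/-- The normalized vector of centered ranks. -/
noncomputable def rankVector (r : ℕ) (σ : Perm (Fin r)) : sumZero r :=
  ⟨WithLp.toLp 2 fun j => rankScale r * rankScore r (σ j), mem_sumZero.2 <| by
    simp only [← mul_sum]
    rw [Equiv.sum_comp σ (rankScore r), sum_rankScore, mul_zero]⟩

theorem inner_rankVector (w : sumZero r) (σ : Perm (Fin r)) :
    inner ℝ w (rankVector r σ)
      = rankScale r * permStat (w : EuclideanSpace ℝ (Fin r)).ofLp (rankScore r) σ := by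
  rw [Submodule.coe_inner, PiLp.inner_apply, permStat, mul_sum]
  refine sum_congr rfl fun j _ => ?_
  simp [rankVector]
  ring

theorem isDesign_rankVector (hr : 4 ≤ r) : IsDesign (rankVector r) := by
  have hr' : (4 : ℝ) ≤ r := by exact_mod_cast hr
  have hr0 : (r : ℝ) ≠ 0 := by positivity
  have hr1 : (r : ℝ) + 1 ≠ 0 := by positivity
  have : Nonempty (Fin r) := ⟨⟨0, by omega⟩⟩
  have ha : ∀ w : sumZero r, ∑ j, (w : EuclideanSpace ℝ (Fin r)) j = 0 := fun w =>
    mem_sumZero.1 w.2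
  have hw : ∀ w : sumZero r, ∑ j, (w : EuclideanSpace ℝ (Fin r)) j ^ 2 = ‖w‖ ^ 2 := fun w => by
    rw [Submodule.coe_norm, EuclideanSpace.real_norm_sq_eq]
  have hmom : ∀ (w : sumZero r) (k : ℕ), 𝔼 σ, inner ℝ w (rankVector r σ) ^ k = rankScale r ^ k
      * 𝔼 σ, permStat (w : EuclideanSpace ℝ (Fin r)).ofLp (rankScore r) σ ^ k :=
    fun w k => by simp only [inner_rankVector, mul_pow, mul_expect]
  have h2 : ∀ w : sumZero r, 𝔼 σ, inner ℝ w (rankVector r σ) ^ 2 = ‖w‖ ^ 2 := fun w => by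
    have h := expect_permStat_sq (ha w) (sum_rankScore (r := r))
    rw [hw, sum_rankScore_sq, Fintype.card_fin] at h
    rw [hmom, rankScale_sq]
    have hr2 : (r : ℝ) - 1 ≠ 0 := by linarith
    rw [div_mul_eq_mul_div, div_eq_iff (by positivity)]
    refine mul_left_cancel₀ hr2 ?_
    linear_combination 12 * h
  have hR : rankScale r ^ 2 * ((r : ℝ) - 1) ^ 2 ≤ 12 := by
    rw [rankScale_sq, div_mul_eq_mul_div, div_le_iff₀ (by positivity)]
    nlinarith
  have h4 : ∀ w : sumZero r, 𝔼 σ, inner ℝ w (rankVector r σ) ^ 4 ≤ 18 * (‖w‖ ^ 2) ^ 2 := fun w => by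
    have h := expect_permStat_four_le (ha w) (sq_rankScore_sub_le (r := r))
    have h2w := h2 w
    rw [hw] at h
    rw [hmom] at h2w ⊢
    calc _ ≤ rankScale r ^ 4 * _ := mul_le_mul_of_nonneg_left h (by positivity)
      _ = 3 / 2 * (rankScale r ^ 2 * ((r : ℝ) - 1) ^ 2) * ‖w‖ ^ 2 * ‖w‖ ^ 2 := by
        linear_combination 3 / 2 * (rankScale r ^ 2 * ((r : ℝ) - 1) ^ 2) * ‖w‖ ^ 2 * h2w
      _ ≤ 3 / 2 * 12 * ‖w‖ ^ 2 * ‖w‖ ^ 2 := by gcongr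
      _ = _ := by ring
  refine ⟨fun σ => ?_, fun w => ?_, h2, fun w => ?_, h4, fun w => ?_⟩
  · rw [finrank_sumZero (by omega), Submodule.coe_norm, EuclideanSpace.real_norm_sq_eq]
    simp only [rankVector, mul_pow, ← mul_sum]
    rw [Equiv.sum_comp σ fun k => rankScore r k ^ 2, sum_rankScore_sq, rankScale_sq,
      Nat.cast_sub (by omega)]
    field_simp
    push_cast
    ring
  · have := hmom w 1
    rw [expect_permStat_odd rankScore_rev odd_one, mul_zero] at this
    simpa using this
  · rw [hmom, expect_permStat_odd rankScore_rev (by decide), mul_zero]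
  · have h := expect_permStat_six_le (ha w) (sq_rankScore_sub_le (r := r))
    have h4w := h4 w
    rw [hw] at h
    rw [hmom] at h4w ⊢
    calc _ ≤ rankScale r ^ 6 * _ := mul_le_mul_of_nonneg_left h (by positivity)
      _ = 5 / 2 * (rankScale r ^ 2 * ((r : ℝ) - 1) ^ 2) * ‖w‖ ^ 2 * (rankScale r ^ 4
          * 𝔼 σ, permStat (w : EuclideanSpace ℝ (Fin r)).ofLp (rankScore r) σ ^ 4) := by ring
      _ ≤ 5 / 2 * 12 * ‖w‖ ^ 2 * (18 * (‖w‖ ^ 2) ^ 2) := by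
        refine mul_le_mul (by gcongr) h4w (mul_nonneg (by positivity) ?_) (by positivity)
        exact expect_nonneg fun σ _ => by positivity
      _ = _ := by ring

theorem friedman_eq (n : ℕ) (ω : Fin n → Perm (Fin r)) :
    friedman n r ω = ‖(√(n : ℝ))⁻¹ • ∑ i, rankVector r (ω i)‖ ^ 2 := by
  rw [Submodule.coe_norm, EuclideanSpace.real_norm_sq_eq, friedman]
  refine sum_congr rfl fun j _ => ?_
  congr 1
  rw [Submodule.coe_smul, Submodule.coe_sum, PiLp.smul_apply, WithLp.ofLp_sum, Finset.sum_apply]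
  simp only [rankVector, rankScale, ← mul_sum, smul_eq_mul]
  rw [Sstat, Real.sqrt_mul (by positivity)]
  simp only [rho, rankScore]
  ring

theorem integral_friedmanMeasure (n : ℕ) (f : (Fin n → Perm (Fin r)) → ℝ) :
    ∫ ω, f ω ∂friedmanMeasure n r = 𝔼 ω, f ω := by
  rw [friedmanMeasure, PMF.integral_eq_sum, Fintype.expect_eq_sum_div_card, sum_div]
  refine sum_congr rfl fun ω _ => ?_
  rw [PMF.uniformOfFintype_apply, ENNReal.toReal_inv, ENNReal.toReal_natCast, smul_eq_mul,
    inv_mul_eq_div]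

end Ranks

theorem stepBound_numeric {y e s : ℝ} (hy : 0 < y) (hy1 : y ≤ 1) (he : √3 ≤ e) (hs : s = 5 * e * y) :
    5 * s * (√2 / 3 / e) + (stepBound s (y ^ 2) e + 240 * (y ^ 2) ^ 2 * s⁻¹ ^ 3 * e ^ 3)
      ≤ 17 * y := by
  have h3 : (1.7 : ℝ) ≤ √3 := Real.le_sqrt_of_sq_le (by norm_num)
  have h2 : √2 ≤ 1.4143 := by rw [Real.sqrt_le_left (by norm_num)]; norm_num
  have he0 : 0 < e := by linarith
  have hei : e⁻¹ ≤ 1 := inv_le_one_of_one_le₀ (by linarith)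
  have key : 5 * s * (√2 / 3 / e) + (stepBound s (y ^ 2) e + 240 * (y ^ 2) ^ 2 * s⁻¹ ^ 3 * e ^ 3)
      = 25 / 3 * √2 * y + 2 / 25 * y ^ 2 + 16 / 125 * (y * e⁻¹) + 3154 / 3125 * y
        + 2560 / 3125 * (y ^ 3 * e⁻¹) + 240 / 125 * y := by
    rw [hs, stepBound]
    field_simp
    ring
  have e2 : y ^ 2 ≤ y := by nlinarith
  have e3 : y ^ 3 * e⁻¹ ≤ y := by
    calc y ^ 3 * e⁻¹ ≤ y ^ 3 * 1 := by gcongr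
      _ ≤ y := by nlinarith
  have e4 : y * e⁻¹ ≤ y := by
    calc y * e⁻¹ ≤ y * 1 := by gcongr
      _ = y := mul_one y
  have e5 : √2 * y ≤ 1.4143 * y := by gcongr
  rw [key]
  linarith

theorem rpow_mul_one_add_inv_ge {r : ℝ} (hr : 4 ≤ r) :
    17 ≤ 12 * (r ^ ((1 : ℝ) / 8) * (1 + 1 / r)) := by
  have h : (17 / 12 : ℝ) ^ 8 ≤ (r ^ ((1 : ℝ) / 8) * (1 + 1 / r)) ^ 8 := by
    have hr0 : 0 < r := by linarith
    rw [mul_pow, ← Real.rpow_natCast (r ^ _), ← Real.rpow_mul hr0.le]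
    norm_num
    have hu : 0 < r⁻¹ := inv_pos.2 hr0
    have h1 : r * r⁻¹ = 1 := mul_inv_cancel₀ hr0.ne'
    have : r * (1 + r⁻¹) ^ 8 ≥ r + 8 + 28 * r⁻¹ := by
      have : r * (1 + r⁻¹) ^ 8 = r + 8 * (r * r⁻¹) + 28 * (r * r⁻¹) * r⁻¹ + (r * r⁻¹) * (56 * r⁻¹ ^ 2
        + 70 * r⁻¹ ^ 3 + 56 * r⁻¹ ^ 4 + 28 * r⁻¹ ^ 5 + 8 * r⁻¹ ^ 6 + r⁻¹ ^ 7) := by ring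
      rw [this, h1]
      have : 0 ≤ 56 * r⁻¹ ^ 2
        + 70 * r⁻¹ ^ 3 + 56 * r⁻¹ ^ 4 + 28 * r⁻¹ ^ 5 + 8 * r⁻¹ ^ 6 + r⁻¹ ^ 7 := by positivity
      linarith
    have h28 : r + 28 * r⁻¹ ≥ 10.5 := by
      nlinarith [sq_nonneg (r - 5.25)]
    linarith
  linarith [le_of_pow_le_pow_left₀ (by norm_num) (by positivity) h]

end FriedmanBound

open FriedmanBound

/-- **Corollary 1.3, case `r ≥ 4` (Gaunt–Reinert).** For `n ≥ 1`, `r ≥ 4` and all `z ≥ 0`,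
`|P(F_r ≤ z) − P(Y_{r−1} ≤ z)| ≤ (12r^{1/8}/n^{1/4})(1 + 1/r) + 41/(r^{1/4}n^{1/2})
+ 28r^{3/8}/n^{3/4} + 3r^{1/8}/n^{5/4} + 8r^{3/4}/n^{3/2}`. -/
theorem friedman_kolmogorov_bound (n r : ℕ) (hn : 1 ≤ n) (hr : 4 ≤ r) (z : ℝ) (hz : 0 ≤ z) :
    |((friedmanMeasure n r) {ω | friedman n r ω ≤ z}).toReal
        - ((chiSq (r - 1)) (Set.Iic z)).toReal|
      ≤ 12 * (r : ℝ) ^ ((1 : ℝ) / 8) / (n : ℝ) ^ ((1 : ℝ) / 4) * (1 + 1 / (r : ℝ))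
        + 41 / ((r : ℝ) ^ ((1 : ℝ) / 4) * (n : ℝ) ^ ((1 : ℝ) / 2))
        + 28 * (r : ℝ) ^ ((3 : ℝ) / 8) / (n : ℝ) ^ ((3 : ℝ) / 4)
        + 3 * (r : ℝ) ^ ((1 : ℝ) / 8) / (n : ℝ) ^ ((5 : ℝ) / 4)
        + 8 * (r : ℝ) ^ ((3 : ℝ) / 4) / (n : ℝ) ^ ((3 : ℝ) / 2) := by
  have hn1 : (1 : ℝ) ≤ n := by exact_mod_cast hn
  have hr4 : (4 : ℝ) ≤ r := by exact_mod_cast hr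
  have hn0 : (0 : ℝ) < n := by linarith
  have hd3 : 3 ≤ r - 1 := by omega
  have hd3' : (3 : ℝ) ≤ (r - 1 : ℕ) := by exact_mod_cast hd3
  have hfin : Module.finrank ℝ (sumZero r) = r - 1 := finrank_sumZero (by omega)
  have hmeas : Measurable (friedman n r) := Measurable.of_discrete
  have : IsProbabilityMeasure (friedmanMeasure n r) := by unfold friedmanMeasure; infer_instance
  have : IsProbabilityMeasure ((friedmanMeasure n r).map (friedman n r)) :=
    Measure.isProbabilityMeasure_map hmeas.aemeasurable
  have : IsProbabilityMeasure (chiSq (r - 1)) :=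
    ProbabilityTheory.isProbabilityMeasure_gammaMeasure (by positivity) (by norm_num)
  set y : ℝ := ((n : ℝ) ^ ((1 : ℝ) / 4))⁻¹ with hy
  have hy0 : 0 < y := by positivity
  have hy1 : y ≤ 1 := inv_le_one_of_one_le₀ (Real.one_le_rpow hn1 (by norm_num))
  have hyt : (√(n : ℝ))⁻¹ = y ^ 2 := by
    rw [hy, inv_pow, ← Real.rpow_natCast, ← Real.rpow_mul hn0.le, Real.sqrt_eq_rpow]
    norm_num
  set e : ℝ := √((r - 1 : ℕ) : ℝ) with he
  have he0 : 0 < e := Real.sqrt_pos.2 (by linarith)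
  have hs : 0 < 5 * e * y := by positivity
  have hsmooth : ∀ a, ∀ S : SmoothStep a (5 * e * y),
      |∫ x, S.f x ∂(friedmanMeasure n r).map (friedman n r) - ∫ x, S.f x ∂chiSq (r - 1)|
        ≤ stepBound (5 * e * y) (y ^ 2) e
          + 240 * (y ^ 2) ^ 2 * (5 * e * y)⁻¹ ^ 3 * e ^ 3 := fun a S => by
    have h := (isDesign_rankVector hr).abs_expect_sub_integral_le S (n := n) hs
      (t := y ^ 2) (by positivity)
      (by rw [← hyt, inv_pow, Real.sq_sqrt hn0.le, mul_inv_cancel₀ hn0.ne']) (by rw [hfin]; exact hd3)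
    rw [integral_gauss_norm_sq_eq_chiSq (by omega) S.f, hfin, ← hyt] at h
    simp only [← friedman_eq] at h
    rwa [integral_map hmeas.aemeasurable S.continuous_f.aestronglyMeasurable,
      integral_friedmanMeasure, ← hyt]
  have hbound := abs_cdf_sub_le hs hsmooth (chiSq_cdf_sub_le hd3) z
  rw [map_measureReal_apply hmeas measurableSet_Iic] at hbound
  have hnum := stepBound_numeric hy0 hy1 (Real.sqrt_le_sqrt hd3') rfl
  have hlead : 17 * y ≤ 12 * (r : ℝ) ^ ((1 : ℝ) / 8) / (n : ℝ) ^ ((1 : ℝ) / 4) * (1 + 1 / (r : ℝ)) :=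
    calc 17 * y ≤ 12 * ((r : ℝ) ^ ((1 : ℝ) / 8) * (1 + 1 / r)) * y := by
          gcongr; exact rpow_mul_one_add_inv_ge hr4
      _ = _ := by rw [hy]; ring
  have h1 : 0 ≤ 41 / ((r : ℝ) ^ ((1 : ℝ) / 4) * (n : ℝ) ^ ((1 : ℝ) / 2)) := by positivity
  have h2 : 0 ≤ 28 * (r : ℝ) ^ ((3 : ℝ) / 8) / (n : ℝ) ^ ((3 : ℝ) / 4) := by positivity
  have h3 : 0 ≤ 3 * (r : ℝ) ^ ((1 : ℝ) / 8) / (n : ℝ) ^ ((5 : ℝ) / 4) := by positivity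
  have h4 : 0 ≤ 8 * (r : ℝ) ^ ((3 : ℝ) / 4) / (n : ℝ) ^ ((3 : ℝ) / 2) := by positivity
  have := hbound.trans (hnum.trans hlead)
  change |((friedmanMeasure n r) (friedman n r ⁻¹' Set.Iic z)).toReal - _| ≤ _
  simp only [measureReal_def] at this
  linarith
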